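/- arXiv:2511.19138 — 2 statements merged into one kernel-verified Lean document; each statement's English description precedes it below -/
import Mathlib

section
/- Let G be a quasi-banana graph with first gonality gon_1(G) = k, where k ≠ 2. Then any two divisors on G realising the second gonality are linearly equivalent. -/
open Finset

variable {V : Type*} [Fintype V] [DecidableEq V]

/-- A finite loopless multigraph on vertex type `V`, given by symmetric edge multiplicities. -/
structure Multigraph (V : Type*) [Fintype V] [DecidableEq V] where
  mult : V → V → ℕ
  symm : ∀ u v, mult u v = mult v u
  loopless : ∀ v, mult v v = 0

namespace Multigraph

def Adj (G : Multigraph V) (u v : V) : Prop := 0 < G.mult u v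

/-- A graph is connected. -/
def Connected (G : Multigraph V) : Prop :=
  Nonempty V ∧ ∀ u v : V, Relation.ReflTransGen G.Adj u v

/-- Valence of a vertex. -/
def valence (G : Multigraph V) (v : V) : ℕ := ∑ u, G.mult v u

/-- The Laplacian applied to an integer-valued function on the vertices. -/
def laplacian (G : Multigraph V) (f : V → ℤ) : V → ℤ :=
  fun w => ∑ u, (G.mult w u : ℤ) * (f w - f u)

/-- Degree of a divisor. -/
def degree (D : V → ℤ) : ℤ := ∑ v, D v

/-- A divisor is effective if all coefficients are nonnegative. -/
def Effective (D : V → ℤ) : Prop := ∀ v, 0 ≤ D v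

/-- Linear equivalence of divisors: they differ by a sequence of chip-firing moves,
equivalently by a Laplacian of an integer function. -/
def LinEquiv (G : Multigraph V) (D D' : V → ℤ) : Prop :=
  ∃ f : V → ℤ, D' = D - G.laplacian f

/-- A divisor is winnable if it is linearly equivalent to an effective divisor. -/
def Winnable (G : Multigraph V) (D : V → ℤ) : Prop :=
  ∃ E : V → ℤ, Effective E ∧ G.LinEquiv D E

/-- The Baker–Norine rank of a divisor: the largest `r` such that `D - E` is winnable for
every effective divisor `E` of degree `r` (the defining set contains all negative integers,
and its supremum is `-1` precisely when `D` itself is not winnable). -/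
noncomputable def rank (G : Multigraph V) (D : V → ℤ) : ℤ :=
  sSup {r : ℤ | ∀ E : V → ℤ, Effective E → degree E = r → G.Winnable (fun w => D w - E w)}

/-- The `k`-th gonality of a graph: the smallest degree of a divisor of rank `k`. -/
noncomputable def gonality (G : Multigraph V) (k : ℤ) : ℤ :=
  sInf {d : ℤ | ∃ D : V → ℤ, G.rank D = k ∧ degree D = d}

/-- A graph is gonality-tight if its second gonality exceeds its first by exactly 1. -/
def GonalityTight (G : Multigraph V) : Prop :=
  G.gonality 2 = G.gonality 1 + 1

/-- A divisor realises the `k`-th gonality if it has rank `k` and degree `gon_k(G)`. -/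
def Realises (G : Multigraph V) (k : ℤ) (D : V → ℤ) : Prop :=
  G.rank D = k ∧ degree D = G.gonality k

/-- A divisor is `v`-reduced: nonnegative away from `v`, and set-firing any nonempty set of
vertices not containing `v` creates a negative coefficient inside the set. -/
def Reduced (G : Multigraph V) (v : V) (D : V → ℤ) : Prop :=
  (∀ w, w ≠ v → 0 ≤ D w) ∧
    ∀ U : Finset V, U.Nonempty → v ∉ U →
      ∃ w ∈ U, D w - ∑ u ∈ Uᶜ, (G.mult w u : ℤ) < 0

/-- The genus (first Betti number) of a graph: `|E| - |V| + 1`. -/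
def genus (G : Multigraph V) : ℤ :=
  ((∑ u, ∑ v, G.mult u v : ℕ) : ℤ) / 2 - Fintype.card V + 1

/-- The canonical divisor of a graph. -/
def canonical (G : Multigraph V) : V → ℤ :=
  fun w => (G.valence w : ℤ) - 2

/-- The subgraph induced on a set `S` of vertices (with all edges among `S`). -/
def induce (G : Multigraph V) (S : Finset V) : Multigraph {x // x ∈ S} where
  mult a b := G.mult a b
  symm a b := G.symm a b
  loopless a := G.loopless a

/-- `G.SeparatedBy u w v` means every path from `w` to `v` passes through `u`. -/
def SeparatedBy (G : Multigraph V) (u w v : V) : Prop :=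
  ¬ Relation.ReflTransGen (fun x y => G.Adj x y ∧ x ≠ u ∧ y ≠ u) w v

end Multigraph

/-- Size of the `i`-th level of a quasi-banana graph: level `0` has a single vertex. -/
def qbSize (q : ℕ → ℕ) (i : ℕ) : ℕ := if i = 0 then 1 else q i

/-- `ℓ` is a quasi-banana labelling of `G` exhibiting `G ≅ QB_m(q_1, …, q_m)`:
`ℓ` is a bijection onto the pairs `(i, j)` with `i ≤ m`, `1 ≤ j ≤ qbSize q i`
(vertex `u_{i,j}` is the vertex labelled `(i,j)`), and the edge multiplicities are:
one edge between distinct vertices of the same level, `(∑_{k=1}^{i} q_k) + 2` edges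
between `u_{i,1}` and each `u_{i+1,j}`, and no other edges. -/
def Multigraph.IsQBLabelling (G : Multigraph V) (m : ℕ) (q : ℕ → ℕ) (ℓ : V → ℕ × ℕ) : Prop :=
  (∀ i, 1 ≤ i → i ≤ m → 0 < q i) ∧
  Function.Injective ℓ ∧
  (∀ v : V, (ℓ v).1 ≤ m ∧ 1 ≤ (ℓ v).2 ∧ (ℓ v).2 ≤ qbSize q (ℓ v).1) ∧
  (∀ i j : ℕ, i ≤ m → 1 ≤ j → j ≤ qbSize q i → ∃ v, ℓ v = (i, j)) ∧
  (∀ v w : V, v ≠ w → G.mult v w =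
    if (ℓ v).1 = (ℓ w).1 then 1
    else if (ℓ v).1 + 1 = (ℓ w).1 ∧ (ℓ v).2 = 1 then (∑ i ∈ Finset.Icc 1 (ℓ v).1, q i) + 2
    else if (ℓ w).1 + 1 = (ℓ v).1 ∧ (ℓ w).2 = 1 then (∑ i ∈ Finset.Icc 1 (ℓ w).1, q i) + 2
    else 0)

/-- A graph is a quasi-banana graph if it is isomorphic to some `QB_m(N)`. -/
def Multigraph.IsQuasiBanana (G : Multigraph V) : Prop :=
  ∃ (m : ℕ) (q : ℕ → ℕ) (ℓ : V → ℕ × ℕ), G.IsQBLabelling m q ℓ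

/-- The graph obtained from `G'` by attaching a complete graph `K_n`: `n` new vertices
pairwise joined by exactly one edge, each joined to `v` by exactly `k+1` edges. -/
def attachComplete (G' : Multigraph V) (v : V) (k n : ℕ) : Multigraph (V ⊕ Fin n) where
  mult x y :=
    match x, y with
    | Sum.inl a, Sum.inl b => G'.mult a b
    | Sum.inl a, Sum.inr _ => if a = v then k + 1 else 0
    | Sum.inr _, Sum.inl b => if b = v then k + 1 else 0
    | Sum.inr i, Sum.inr j => if i = j then 0 else 1
  symm := by
    rintro (a | i) (b | j)
    · exact G'.symm a b
    · rfl
    · rfl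
    · by_cases h : i = j
      · simp [h]
      · simp [h, Ne.symm h]
  loopless := by
    rintro (a | i)
    · exact G'.loopless a
    · simp


namespace Multigraph

theorem laplacian_add (G : Multigraph V) (f g : V → ℤ) :
    G.laplacian (f + g) = G.laplacian f + G.laplacian g := by
  funext w
  simp only [laplacian, Pi.add_apply, ← Finset.sum_add_distrib]
  exact Finset.sum_congr rfl fun u _ => by ring

theorem laplacian_neg (G : Multigraph V) (f : V → ℤ) :
    G.laplacian (-f) = - G.laplacian f := by
  funext w
  simp only [laplacian, Pi.neg_apply, ← Finset.sum_neg_distrib]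
  exact Finset.sum_congr rfl fun u _ => by ring

theorem linEquiv_refl (G : Multigraph V) (D : V → ℤ) : G.LinEquiv D D := by
  refine ⟨0, ?_⟩
  funext w
  simp [laplacian]

theorem LinEquiv.symm' {G : Multigraph V} {D D' : V → ℤ} (h : G.LinEquiv D D') :
    G.LinEquiv D' D := by
  obtain ⟨f, rfl⟩ := h
  refine ⟨-f, ?_⟩
  rw [laplacian_neg]; abel

theorem LinEquiv.trans' {G : Multigraph V} {D D' D'' : V → ℤ} (h : G.LinEquiv D D')
    (h' : G.LinEquiv D' D'') : G.LinEquiv D D'' := by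
  obtain ⟨f, rfl⟩ := h
  obtain ⟨g, rfl⟩ := h'
  refine ⟨f + g, ?_⟩
  rw [laplacian_add]; abel

theorem LinEquiv.sub' {G : Multigraph V} {D D' : V → ℤ} (h : G.LinEquiv D D') (E : V → ℤ) :
    G.LinEquiv (fun w => D w - E w) (fun w => D' w - E w) := by
  obtain ⟨f, rfl⟩ := h
  refine ⟨f, ?_⟩
  funext w
  simp only [Pi.sub_apply]; ring

theorem Winnable.congr' {G : Multigraph V} {D D' : V → ℤ} (h : G.LinEquiv D D')
    (hD : G.Winnable D) : G.Winnable D' := by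
  obtain ⟨E, hE, h1⟩ := hD
  exact ⟨E, hE, h.symm'.trans' h1⟩

theorem sum_lap (G : Multigraph V) (f : V → ℤ) (S : Finset V) :
    ∑ w ∈ S, G.laplacian f w = ∑ w ∈ S, ∑ u ∈ Sᶜ, (G.mult w u : ℤ) * (f w - f u) := by
  have h0 : ∑ w ∈ S, ∑ u ∈ S, (G.mult w u : ℤ) * (f w - f u) = 0 := by
    have h1 : ∑ w ∈ S, ∑ u ∈ S, (G.mult w u : ℤ) * (f w - f u)
        = - ∑ w ∈ S, ∑ u ∈ S, (G.mult w u : ℤ) * (f w - f u) := by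
      conv_lhs => rw [Finset.sum_comm]
      rw [← Finset.sum_neg_distrib]
      refine Finset.sum_congr rfl fun w _ => ?_
      rw [← Finset.sum_neg_distrib]
      refine Finset.sum_congr rfl fun u _ => ?_
      rw [G.symm u w]; ring
    linarith
  have h2 : ∀ w, G.laplacian f w = ∑ u ∈ S, (G.mult w u : ℤ) * (f w - f u)
      + ∑ u ∈ Sᶜ, (G.mult w u : ℤ) * (f w - f u) := fun w => by
    rw [laplacian, Finset.sum_add_sum_compl]
  simp only [h2, Finset.sum_add_distrib, h0, zero_add]

theorem degree_lap (G : Multigraph V) (f : V → ℤ) : ∑ w, G.laplacian f w = 0 := by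
  rw [sum_lap]; simp

theorem LinEquiv.degree' {G : Multigraph V} {D D' : V → ℤ} (h : G.LinEquiv D D') :
    degree D' = degree D := by
  obtain ⟨f, rfl⟩ := h
  simp [degree, Finset.sum_sub_distrib, degree_lap]

/-- number of vertices of level at most `i` -/
def NN (lev : V → ℕ) (i : ℕ) : ℕ := (univ.filter fun v => lev v ≤ i).card

/-- vertices of level `i` -/
def LL (lev : V → ℕ) (i : ℕ) : Finset V := univ.filter fun v => lev v = i

/-- vertices of level at most `i` -/
def BB (lev : V → ℕ) (i : ℕ) : Finset V := univ.filter fun v => lev v ≤ i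

/-- Abstract description of a quasi-banana graph. -/
structure QBD (G : Multigraph V) (m : ℕ) (lev : V → ℕ) (p : ℕ → V) : Prop where
  lev_le : ∀ x, lev x ≤ m
  lev_p : ∀ i, i ≤ m → lev (p i) = i
  lev0 : ∀ x, lev x = 0 → x = p 0
  same : ∀ x y, x ≠ y → lev x = lev y → G.mult x y = 1
  up : ∀ i y, lev y = i + 1 → G.mult (p i) y = NN lev i + 1
  zero : ∀ x y, lev x < lev y → ¬ (lev y = lev x + 1 ∧ x = p (lev x)) → G.mult x y = 0

theorem BB_succ (lev : V → ℕ) (i : ℕ) (h : V → ℤ) :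
    ∑ w ∈ BB lev (i+1), h w = ∑ w ∈ BB lev i, h w + ∑ w ∈ LL lev (i+1), h w := by
  simp only [BB, LL, Finset.sum_filter, ← Finset.sum_add_distrib]
  refine Finset.sum_congr rfl fun w _ => ?_
  rcases lt_trichotomy (lev w) (i+1) with h1 | h1 | h1
  · simp [h1.le, Nat.lt_succ_iff.mp h1, h1.ne]
  · simp [h1]
  · have h2 : ¬ lev w ≤ i + 1 := by omega
    have h3 : ¬ lev w ≤ i := by omega
    have h4 : ¬ lev w = i + 1 := by omega
    simp [h2, h3, h4]

theorem NN_succ (lev : V → ℕ) (i : ℕ) : (NN lev (i+1) : ℤ) = NN lev i + (LL lev (i+1)).card := by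
  have := BB_succ lev i (fun _ => 1)
  simpa [NN, BB] using this

theorem NN_eq (lev : V → ℕ) (i : ℕ) : NN lev i = (BB lev i).card := rfl

namespace QBD

variable {G : Multigraph V} {m : ℕ} {lev : V → ℕ} {p : ℕ → V}

theorem lap_low (h : QBD G m lev p) (f : V → ℤ) (i : ℕ) (hi : i ≤ m) :
    ∑ w ∈ BB lev i, G.laplacian f w = (NN lev i + 1) * ∑ z ∈ LL lev (i+1), (f (p i) - f z) := by
  rw [sum_lap, Finset.sum_comm]
  have h1 : ∀ u ∈ (BB lev i)ᶜ, ∑ w ∈ BB lev i, (G.mult w u : ℤ) * (f w - f u)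
      = if lev u = i + 1 then ((NN lev i : ℤ) + 1) * (f (p i) - f u) else 0 := by
    intro u hu
    have hu' : i < lev u := by simpa [BB] using hu
    rw [Finset.sum_eq_single (p i)]
    · split_ifs with h2
      · rw [h.up i u h2]; push_cast; ring
      · rw [h.zero]
        · simp
        · rw [h.lev_p i hi]; exact hu'
        · rw [h.lev_p i hi]; tauto
    · intro w hw hne
      have hw' : lev w ≤ i := by simpa [BB] using hw
      rw [h.zero]
      · simp
      · omega
      · rintro ⟨h2, h3⟩
        apply hne
        rw [h3]; congr 1; omega
    · intro hn
      exact absurd (by simp [BB, h.lev_p i hi]) hn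
  rw [Finset.sum_congr rfl h1, ← Finset.sum_filter, Finset.mul_sum]
  refine Finset.sum_congr ?_ fun _ _ => rfl
  ext u
  simp [BB, LL]
  omega

theorem lap_at (h : QBD G m lev p) (f : V → ℤ) (i : ℕ) (y : V) (hy : lev y = i + 1) :
    G.laplacian f y = (NN lev i + 1) * (f y - f (p i)) + ∑ z ∈ LL lev (i+1), (f y - f z)
      + ∑ z ∈ LL lev (i+2), (G.mult y z : ℤ) * (f y - f z) := by
  have hi : i + 1 ≤ m := hy ▸ h.lev_le y
  have hp := h.lev_p i (by omega)
  have h1 : ∀ u, (G.mult y u : ℤ) * (f y - f u) =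
      (if u = p i then ((NN lev i : ℤ) + 1) * (f y - f u) else 0)
      + (if lev u = i + 1 then (f y - f u) else 0)
      + (if lev u = i + 2 then (G.mult y u : ℤ) * (f y - f u) else 0) := by
    intro u
    by_cases h2 : u = p i
    · subst h2
      rw [G.symm, h.up i y hy]
      simp [hp]
    · rcases lt_trichotomy (lev u) (i+1) with h3 | h3 | h3
      · rw [G.symm, h.zero u y (by omega)]
        · have h4 : ¬ lev u = i + 1 := by omega
          have h5 : ¬ lev u = i + 2 := by omega
          simp [h2, h4, h5]
        · rintro ⟨h4, h5⟩
          apply h2; rw [h5]; congr 1; omega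
      · by_cases h4 : y = u
        · subst h4; simp
        · rw [h.same y u h4 (by omega)]
          simp [h2, h3]
      · have h4 : ¬ lev u = i + 1 := by omega
        by_cases h5 : lev u = i + 2
        · simp [h2, h5]
        · rw [h.zero y u (by omega) (by omega)]
          simp [h2, h4]
  rw [laplacian, Finset.sum_congr rfl fun u _ => h1 u]
  simp only [Finset.sum_add_distrib, LL, Finset.sum_filter]
  simp

theorem red_mono (h : QBD G m lev p) {D E f : V → ℤ} (hR : G.Reduced (p 0) D)
    (hE : Effective E) (hF : ∀ w, 0 ≤ D w - E w - G.laplacian f w) (i : ℕ)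
    (y : V) (hy : i + 1 ≤ lev y) : f y ≤ f (p i) := by
  by_contra hlt
  push Not at hlt
  obtain ⟨x, hx, hmax⟩ := Finset.exists_max_image (univ.filter fun v => i + 1 ≤ lev v) f
    ⟨y, by simpa using hy⟩
  have hx' : i + 1 ≤ lev x := by simpa using hx
  have hmax' : ∀ v, i + 1 ≤ lev v → f v ≤ f x := fun v hv => hmax v (by simpa using hv)
  have hxp : f (p i) < f x := lt_of_lt_of_le hlt (hmax' y hy)
  obtain ⟨w, hw, hneg⟩ := hR.2 (univ.filter fun v => i + 1 ≤ lev v ∧ f v = f x)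
    ⟨x, by simpa using hx'⟩ (by
      intro hmem
      have h1 : i + 1 ≤ lev (p 0) := (by simpa using hmem : _ ∧ _).1
      rw [h.lev_p 0 (Nat.zero_le _)] at h1
      omega)
  have hw' : i + 1 ≤ lev w ∧ f w = f x := by simpa using hw
  have h2 : ∑ u ∈ (univ.filter fun v => i + 1 ≤ lev v ∧ f v = f x)ᶜ, (G.mult w u : ℤ)
      ≤ G.laplacian f w := by
    rw [laplacian, ← Finset.sum_add_sum_compl (univ.filter fun v => i + 1 ≤ lev v ∧ f v = f x)]
    have h3 : ∑ u ∈ (univ.filter fun v => i + 1 ≤ lev v ∧ f v = f x),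
        (G.mult w u : ℤ) * (f w - f u) = 0 := by
      refine Finset.sum_eq_zero fun u hu => ?_
      have hu' : i + 1 ≤ lev u ∧ f u = f x := by simpa using hu
      rw [hw'.2, hu'.2]; simp
    rw [h3, zero_add]
    refine Finset.sum_le_sum fun u hu => ?_
    have hu' : i + 1 ≤ lev u → ¬ f u = f x := by simpa using hu
    by_cases h4 : i + 1 ≤ lev u
    · have h5 : f u < f x := lt_of_le_of_ne (hmax' u h4) (hu' h4)
      have h6 : 1 ≤ f w - f u := by rw [hw'.2]; omega
      have h7 : (0:ℤ) ≤ G.mult w u := Int.natCast_nonneg _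
      nlinarith
    · by_cases h8 : u = p i
      · subst h8
        have h6 : 1 ≤ f w - f (p i) := by rw [hw'.2]; omega
        have h7 : (0:ℤ) ≤ G.mult w (p i) := Int.natCast_nonneg _
        nlinarith
      · rw [G.symm, h.zero u w (by omega)]
        · simp
        · rintro ⟨h9, h10⟩
          apply h8; rw [h10]; congr 1; omega
  have := hF w
  have := hE w
  linarith

theorem core (h : QBD G m lev p) {D E f : V → ℤ} (hR : G.Reduced (p 0) D)
    (hE : Effective E) (hF : ∀ w, 0 ≤ D w - E w - G.laplacian f w) (i : ℕ) (hi : i + 1 ≤ m) :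
    ∃ g : V → ℤ, (∀ z ∈ LL lev (i+1), g z = f (p i) - f z) ∧ (∀ z ∈ LL lev (i+1), 0 ≤ g z) ∧
      (∑ w ∈ BB lev i, D w - ∑ w ∈ BB lev i, E w = ∑ w ∈ BB lev i, (D w - E w - G.laplacian f w)
        + (NN lev i + 1) * ∑ z ∈ LL lev (i+1), g z) ∧
      (∀ z ∈ LL lev (i+1), g z = 0 → ∑ z ∈ LL lev (i+1), g z ≤ D z - E z) := by
  refine ⟨fun z => f (p i) - f z, fun _ _ => rfl, ?_, ?_, ?_⟩
  · intro z hz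
    have hz' : lev z = i + 1 := by simpa [LL] using hz
    have := h.red_mono hR hE hF i z (by omega)
    simpa using this
  · rw [← h.lap_low f i (by omega)]
    simp only [Finset.sum_sub_distrib]; ring
  · intro z hz hg
    have hz' : lev z = i + 1 := by simpa [LL] using hz
    have h1 := h.lap_at f i z hz'
    have h2 : f z = f (p i) := by simp only at hg; linarith
    have h3 : 0 ≤ ∑ u ∈ LL lev (i+2), (G.mult z u : ℤ) * (f z - f u) := by
      refine Finset.sum_nonneg fun u hu => ?_
      have hu' : lev u = i + 2 := by simpa [LL] using hu
      by_cases h4 : z = p (i+1)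
      · have := h.red_mono hR hE hF (i+1) u (by omega)
        rw [h4]
        exact mul_nonneg (Int.natCast_nonneg _) (by linarith)
      · rw [h.zero z u (by omega)]
        · simp
        · rintro ⟨h9, h10⟩
          apply h4; rw [h10]; congr 1
    have h5 := hF z
    rw [h1, h2] at h5
    rw [h2] at h3
    simp only [sub_self, mul_zero, zero_add] at h5
    linarith

/-- counting consequence -/
theorem count {L : Finset V} {g D : V → ℤ} {x : V} (hx : x ∈ L) (hg : ∀ z ∈ L, 0 ≤ g z)
    (hgx : 1 ≤ g x) (hD : ∀ z ∈ L, 0 ≤ D z)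
    (hz : ∀ z ∈ L, g z = 0 → ∑ z ∈ L, g z ≤ D z) :
    ∃ w : ℤ, 1 ≤ w ∧ w ≤ L.card ∧ w ≤ ∑ z ∈ L, g z ∧
      (L.card - w) * ∑ z ∈ L, g z ≤ ∑ z ∈ L, D z := by
  refine ⟨((L.filter fun z => g z ≠ 0).card : ℤ), ?_, ?_, ?_, ?_⟩
  · have : 0 < (L.filter fun z => g z ≠ 0).card :=
      Finset.card_pos.2 ⟨x, by simp [hx]; omega⟩
    exact_mod_cast this
  · exact_mod_cast Finset.card_filter_le _ _
  · have h1 : ((L.filter fun z => g z ≠ 0).card : ℤ) = ∑ z ∈ L, if g z ≠ 0 then 1 else 0 := by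
      rw [Finset.card_filter]; push_cast; rfl
    rw [h1]
    refine Finset.sum_le_sum fun z hzL => ?_
    have := hg z hzL
    split_ifs with h2
    · omega
    · omega
  · have h1 : ((L.card : ℤ) - (L.filter fun z => g z ≠ 0).card) * ∑ z ∈ L, g z
        = ∑ y ∈ L, if g y = 0 then ∑ z ∈ L, g z else 0 := by
      rw [← Finset.sum_filter, Finset.sum_const, nsmul_eq_mul]
      congr 1
      have := Finset.card_filter_add_card_filter_not (s := L) (fun z => g z = 0)
      simp only [← ne_eq] at this
      push_cast [← this]; ring
    rw [h1]
    refine Finset.sum_le_sum fun z hzL => ?_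
    split_ifs with h2
    · exact hz z hzL h2
    · exact hD z hzL

/-- single chip -/
def chip (x : V) : V → ℤ := fun w => if w = x then 1 else 0

theorem chip_eff (x : V) : Effective (chip x) := fun w => by
  unfold chip; split_ifs <;> simp

theorem win_lap {D : V → ℤ} (hw : G.Winnable D) : ∃ f, ∀ w, 0 ≤ D w - G.laplacian f w := by
  obtain ⟨E, hE, f, rfl⟩ := hw
  exact ⟨f, hE⟩

theorem BB_zero (h : QBD G m lev p) : BB lev 0 = {p 0} := by
  ext x
  simp only [BB, Finset.mem_filter, Finset.mem_univ, true_and, Finset.mem_singleton]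
  constructor
  · intro hx; exact h.lev0 x (by omega)
  · rintro rfl; rw [h.lev_p 0 (Nat.zero_le _)]

theorem p0_lap (h : QBD G m lev p) {D E f : V → ℤ} (hR : G.Reduced (p 0) D)
    (hE : Effective E) (hF : ∀ w, 0 ≤ D w - E w - G.laplacian f w) : E (p 0) ≤ D (p 0) := by
  have h1 := hF (p 0)
  have h2 : 0 ≤ G.laplacian f (p 0) := by
    refine Finset.sum_nonneg fun u _ => ?_
    by_cases h3 : lev u = 0
    · rw [← h.lev0 u h3]; simp
    · exact mul_nonneg (Int.natCast_nonneg _)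
        (by linarith [h.red_mono hR hE hF 0 u (by omega)])
  linarith

theorem gon1_level (h : QBD G m lev p) {D : V → ℤ} (hR : G.Reduced (p 0) D)
    (hr : ∀ x, G.Winnable (fun w => D w - chip x w)) :
    ∀ i, i ≤ m → (NN lev i : ℤ) ≤ ∑ w ∈ BB lev i, D w := by
  intro i
  induction i with
  | zero =>
    intro _
    obtain ⟨f, hf⟩ := win_lap (hr (p 0))
    have := h.p0_lap hR (chip_eff _) hf
    rw [NN_eq, h.BB_zero]
    simpa [chip] using this
  | succ i ih =>
    intro hi
    have ih := ih (by omega)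
    by_contra hlt
    push Not at hlt
    rw [BB_succ, NN_succ] at hlt
    have hne : ∃ x ∈ LL lev (i+1), D x ≤ 0 := by
      by_contra hcon
      push Not at hcon
      have : ∑ w ∈ LL lev (i+1), (1:ℤ) ≤ ∑ w ∈ LL lev (i+1), D w :=
        Finset.sum_le_sum fun w hw => hcon w hw
      simp at this
      linarith
    obtain ⟨x, hx, hDx⟩ := hne
    obtain ⟨f, hf⟩ := win_lap (hr x)
    obtain ⟨g, -, hg0, hlow, hz⟩ := h.core hR (chip_eff _) hf i hi
    have hlx : lev x = i + 1 := by simpa [LL] using hx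
    have hE0 : ∀ z, 0 ≤ chip x z := chip_eff x
    have hs0 : 0 ≤ ∑ z ∈ LL lev (i+1), g z := Finset.sum_nonneg hg0
    have hgx : 1 ≤ g x := by
      by_contra h1
      have h2 : g x = 0 := by linarith [hg0 x hx, (by omega : g x ≤ 0)]
      have := hz x hx h2
      simp [chip] at this
      linarith
    have hDL : ∀ z ∈ LL lev (i+1), 0 ≤ D z := fun z hzz => hR.1 z (by
      rintro rfl
      simp [LL, h.lev_p 0 (Nat.zero_le _)] at hzz)
    obtain ⟨w, hw1, hw2, hw3, hw4⟩ := count hx hg0 hgx hDL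
      (fun z hzz h0 => (hz z hzz h0).trans (by linarith [hE0 z]))
    have hF0 : 0 ≤ ∑ w ∈ BB lev i, (D w - chip x w - G.laplacian f w) :=
      Finset.sum_nonneg fun w _ => hf w
    have hC0 : 0 ≤ ∑ w ∈ BB lev i, chip x w := Finset.sum_nonneg fun w _ => hE0 w
    set s := ∑ z ∈ LL lev (i+1), g z
    have hN : (0:ℤ) ≤ NN lev i := Int.natCast_nonneg _
    have h3 : s * (NN lev i + 1 + (LL lev (i+1)).card - w) < NN lev i + (LL lev (i+1)).card := by
      nlinarith
    have h4 : w * (NN lev i + 1 + (LL lev (i+1)).card - w)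
        ≤ s * (NN lev i + 1 + (LL lev (i+1)).card - w) :=
      mul_le_mul_of_nonneg_right hw3 (by linarith)
    nlinarith [mul_nonneg (by linarith : 0 ≤ w - 1)
      (by linarith : (0:ℤ) ≤ NN lev i + (LL lev (i+1)).card - w)]

end QBD
end Multigraph

namespace Multigraph
namespace QBD

variable {G : Multigraph V} {m : ℕ} {lev : V → ℕ} {p : ℕ → V}

theorem BB_top (h : QBD G m lev p) : BB lev m = univ := by
  ext x; simp [BB, h.lev_le x]

theorem NN_top (h : QBD G m lev p) : NN lev m = Fintype.card V := by
  rw [NN_eq, h.BB_top]; rfl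

theorem NN_pos (h : QBD G m lev p) (i : ℕ) : (1:ℤ) ≤ NN lev i := by
  have : 0 < NN lev i := Finset.card_pos.2 ⟨p 0, by simp [h.lev_p 0 (Nat.zero_le _)]⟩
  exact_mod_cast this

theorem exists_reduced (h : QBD G m lev p) {D : V → ℤ} (hD : G.Winnable D) :
    ∃ D1, G.LinEquiv D D1 ∧ Effective D1 ∧ G.Reduced (p 0) D1 := by
  obtain ⟨E0, hE0, hl0⟩ := hD
  set d := degree D with hd
  have hd0 : 0 ≤ d := by
    rw [hd, ← hl0.degree']; exact Finset.sum_nonneg fun v _ => hE0 v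
  let W : V → ℤ := fun v => (d + 1) ^ (m - lev v)
  have hpow : ∀ k : ℕ, (1:ℤ) ≤ (d+1)^k := fun k => one_le_pow₀ (by linarith)
  obtain ⟨ub, ⟨D1, hl1, hE1, hΦ⟩, hmax⟩ := Int.exists_greatest_of_bdd
    (P := fun z => ∃ D1, G.LinEquiv D D1 ∧ Effective D1 ∧ ∑ v, D1 v * W v = z)
    ⟨d * (d+1)^m, by
      rintro z ⟨D1, hl, hE, rfl⟩
      have hdd : ∑ v, D1 v = d := hl.degree'
      have hgoal : ∑ v, D1 v * W v ≤ (∑ v, D1 v) * (d+1)^m := by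
        rw [Finset.sum_mul]
        refine Finset.sum_le_sum fun v _ => ?_
        refine mul_le_mul_of_nonneg_left ?_ (hE v)
        exact pow_le_pow_right₀ (by linarith) (by omega)
      rwa [hdd] at hgoal⟩
    ⟨_, E0, hl0, hE0, rfl⟩
  refine ⟨D1, hl1, hE1, fun w _ => hE1 w, ?_⟩
  intro U hU hpU
  by_contra hcon
  push Not at hcon
  obtain ⟨w0, hw0, hmin⟩ := Finset.exists_min_image U lev hU
  have hlev0 : lev w0 ≠ 0 := fun h0 => hpU (h.lev0 w0 h0 ▸ hw0)
  obtain ⟨i, hi⟩ : ∃ i, lev w0 = i + 1 := ⟨lev w0 - 1, by omega⟩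
  have him : i + 1 ≤ m := hi ▸ h.lev_le w0
  let t : V → ℤ := fun v => if v ∈ U then 1 else 0
  let D2 : V → ℤ := D1 - G.laplacian t
  have hin : ∀ w ∈ U, G.laplacian t w = ∑ u ∈ Uᶜ, (G.mult w u : ℤ) := by
    intro w hw
    rw [laplacian, ← Finset.sum_add_sum_compl U]
    have h1 : ∑ u ∈ U, (G.mult w u : ℤ) * (t w - t u) = 0 :=
      Finset.sum_eq_zero fun u hu => by simp [t, hw, hu]
    rw [h1, zero_add]
    refine Finset.sum_congr rfl fun u hu => ?_
    have : u ∉ U := by simpa using hu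
    simp [t, hw, this]
  have hout : ∀ w, w ∉ U → ∀ u ∈ U, G.laplacian t w ≤ - (G.mult w u : ℤ) := by
    intro w hw u hu
    have h1 : ∀ x, (G.mult w x : ℤ) * (t w - t x) ≤ 0 := by
      intro x
      have : (0:ℤ) ≤ G.mult w x := Int.natCast_nonneg _
      by_cases hx : x ∈ U <;> simp [t, hw, hx]
    rw [laplacian, ← Finset.add_sum_erase univ _ (Finset.mem_univ u)]
    have h2 : ∑ x ∈ univ.erase u, (G.mult w x : ℤ) * (t w - t x) ≤ 0 :=
      Finset.sum_nonpos fun x _ => h1 x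
    have h3 : (G.mult w u : ℤ) * (t w - t u) = - (G.mult w u : ℤ) := by simp [t, hw, hu]
    linarith
  have hE2 : Effective D2 := by
    intro w
    by_cases hw : w ∈ U
    · have := hcon w hw
      simp only [D2, Pi.sub_apply, hin w hw]; exact this
    · have h1 := hout w hw w0 hw0
      have h2 := hE1 w
      have h3 : (0:ℤ) ≤ G.mult w w0 := Int.natCast_nonneg _
      simp only [D2, Pi.sub_apply]; linarith
  have hkey := hmax _ ⟨D2, hl1.trans' ⟨t, rfl⟩, hE2, rfl⟩
  have hpt : ∀ v, D1 v * W v + (if v = p i then (d+1)^(m-i) else 0) - D1 v * (d+1)^(m-i-1)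
      ≤ D2 v * W v := by
    intro v
    have hWv : 1 ≤ W v := hpow _
    by_cases hv : lev v ≤ i
    · have hvU : v ∉ U := fun hvU => by have := hmin v hvU; omega
      have h1 := hout v hvU w0 hw0
      have h2 : 0 ≤ D1 v * (d+1)^(m-i-1) := mul_nonneg (hE1 v) (by linarith [hpow (m-i-1)])
      split_ifs with hvp
      · have h3 : W v = (d+1)^(m-i) := by
          simp only [W, hvp, h.lev_p i (by omega)]
        have h4 : G.mult v w0 = NN lev i + 1 := by rw [hvp]; exact h.up i w0 hi
        have h5 : D1 v + 1 ≤ D2 v := by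
          rw [h4] at h1; push_cast at h1
          simp only [D2, Pi.sub_apply]
          linarith [h.NN_pos i]
        rw [← h3]
        nlinarith
      · have h5 : D1 v ≤ D2 v := by
          have h3 : (0:ℤ) ≤ G.mult v w0 := Int.natCast_nonneg _
          simp only [D2, Pi.sub_apply]; linarith
        nlinarith
    · have h1 : v ≠ p i := by
        rintro rfl; rw [h.lev_p i (by omega)] at hv; omega
      have h2 : W v ≤ (d+1)^(m-i-1) := pow_le_pow_right₀ (by linarith) (by omega)
      have h3 : 0 ≤ D2 v * W v := mul_nonneg (hE2 v) (by linarith)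
      have h4 : D1 v * W v ≤ D1 v * (d+1)^(m-i-1) := mul_le_mul_of_nonneg_left h2 (hE1 v)
      rw [if_neg h1]; linarith
  have hsum := Finset.sum_le_sum fun v (_ : v ∈ univ) => hpt v
  rw [Finset.sum_sub_distrib, Finset.sum_add_distrib, ← Finset.sum_mul, hΦ] at hsum
  have h6 : ∑ v, D1 v = d := hl1.degree'
  rw [h6, Finset.sum_ite_eq' univ (p i)] at hsum
  simp only [Finset.mem_univ, if_true] at hsum
  have h7 : (d+1)^(m-i) = (d+1)^(m-i-1) * (d+1) := by
    rw [← pow_succ]; congr 1; omega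
  have := hpow (m-i-1)
  rw [h7] at hsum
  linarith

theorem win_of_sub {D E : V → ℤ} (hE : Effective E) (hw : G.Winnable (fun w => D w - E w)) :
    G.Winnable D := by
  obtain ⟨F, hF, f, hf⟩ := hw
  refine ⟨fun w => F w + E w, fun w => add_nonneg (hF w) (hE w), f, ?_⟩
  funext w
  have := congrFun hf w
  simp only [Pi.sub_apply] at this ⊢
  linarith

theorem gon1 (h : QBD G m lev p) {D : V → ℤ}
    (hr : ∀ x, G.Winnable (fun w => D w - chip x w)) : (Fintype.card V : ℤ) ≤ degree D := by
  obtain ⟨D1, hl, -, hR⟩ := h.exists_reduced (win_of_sub (chip_eff (p 0)) (hr (p 0)))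
  have := h.gon1_level hR (fun x => (hr x).congr' (hl.sub' _)) m le_rfl
  rw [h.NN_top, h.BB_top] at this
  rw [← hl.degree']; exact this

theorem p0_even (h : QBD G m lev p) (f : V → ℤ) : (2:ℤ) ∣ G.laplacian f (p 0) := by
  refine Finset.dvd_sum fun u _ => Dvd.dvd.mul_right ?_ _
  have hp := h.lev_p 0 (Nat.zero_le _)
  rcases Nat.lt_trichotomy (lev u) 1 with h1 | h1 | h1
  · rw [← h.lev0 u (by omega), G.loopless]; simp
  · rw [h.up 0 u h1, NN_eq, h.BB_zero]; simp
  · rw [h.zero _ _ (by omega) (by omega)]; simp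

theorem two_le {L : Finset V} {g : V → ℤ} (hg : ∀ z ∈ L, 0 ≤ g z) {x y : V} (hx : x ∈ L)
    (hy : y ∈ L) (hxy : x ≠ y) : g x + g y ≤ ∑ z ∈ L, g z := by
  rw [← Finset.sum_pair hxy]
  refine Finset.sum_le_sum_of_subset_of_nonneg ?_ fun z hz _ => hg z hz
  intro z hz
  simp only [Finset.mem_insert, Finset.mem_singleton] at hz
  rcases hz with rfl | rfl <;> assumption

theorem chip_sum (x : V) (S : Finset V) : ∑ w ∈ S, chip x w = if x ∈ S then 1 else 0 := by
  simp [chip]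

theorem gon2 {i : ℕ} (h : QBD G (i+1) lev p) (hbig : 1 ≤ i ∨ 2 ≤ (LL lev (i+1)).card)
    {D : V → ℤ} (hD0 : Effective D) (hR : G.Reduced (p 0) D)
    (hr : ∀ x y, G.Winnable (fun w => D w - (chip x w + chip y w)))
    (hdeg : degree D ≤ Fintype.card V + 1) :
    G.LinEquiv D (fun w => if w = p (i+1) then (Fintype.card V : ℤ) + 1 else 0) := by
  have hcard : (Fintype.card V : ℤ) = NN lev i + (LL lev (i+1)).card := by
    rw [← h.NN_top, NN_succ]
  have hsplit : ∀ F : V → ℤ, ∑ w, F w = ∑ w ∈ BB lev i, F w + ∑ w ∈ LL lev (i+1), F w := by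
    intro F; rw [← BB_succ, h.BB_top]
  have hp0 := h.lev_p 0 (Nat.zero_le _)
  have hpi := h.lev_p i (by omega)
  have hE2 : ∀ x y : V, Effective (fun w => chip x w + chip y w) :=
    fun x y w => add_nonneg (chip_eff x w) (chip_eff y w)
  have hcoreE := fun (x y : V) (f : V → ℤ) hf =>
    h.core (E := fun w => chip x w + chip y w) (f := f) hR (hE2 x y) hf i le_rfl
  have hLB : ∀ x ∈ LL lev (i+1), x ∉ BB lev i := by
    intro x hx; simp only [LL, BB, Finset.mem_filter, Finset.mem_univ, true_and] at hx ⊢; omega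
  have hp0B : p 0 ∈ BB lev i := by simp [BB, hp0]
  have hpiB : p i ∈ BB lev i := by simp [BB, hpi]
  have hA : (NN lev i : ℤ) + 1 ≤ ∑ w ∈ BB lev i, D w := by
    have hR' : G.Reduced (p 0) (fun w => D w - chip (p 0) w) := by
      refine ⟨fun w hw => ?_, fun U hU hpU => ?_⟩
      · simpa [chip, hw] using hD0 w
      · obtain ⟨w, hw, hlt⟩ := hR.2 U hU hpU
        exact ⟨w, hw, by linarith [chip_eff (p 0) w]⟩
    have := h.gon1_level hR' (fun x => by
      have := hr (p 0) x
      simpa only [sub_sub] using this) i (by omega)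
    rw [Finset.sum_sub_distrib, chip_sum, if_pos hp0B] at this
    linarith
  have hN := h.NN_pos i
  have hdeg' : ∑ w ∈ BB lev i, D w + ∑ w ∈ LL lev (i+1), D w
      ≤ NN lev i + (LL lev (i+1)).card + 1 := by
    rw [← hsplit, ← hcard]; exact hdeg
  set A := ∑ w ∈ BB lev i, D w
  set N : ℤ := ((NN lev i : ℕ) : ℤ)
  set L := LL lev (i+1) with hL
  by_cases hne : ∃ x ∈ L, D x ≤ 0
  · exfalso
    obtain ⟨x, hx, hDx⟩ := hne
    have hlx : lev x = i + 1 := by simpa [hL, LL] using hx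
    -- first test divisor
    obtain ⟨f, hf⟩ := win_lap (hr x (p i))
    obtain ⟨g, -, hg0, hlow, hz⟩ := hcoreE x (p i) f hf
    rw [Finset.sum_add_distrib, chip_sum, chip_sum, if_neg (hLB x hx), if_pos hpiB] at hlow
    have hgx : 1 ≤ g x := by
      by_contra h1
      have h2 : g x = 0 := by linarith [hg0 x hx, (by omega : g x ≤ 0)]
      have h3 := hz x hx h2
      have h4 : 0 ≤ ∑ z ∈ L, g z := Finset.sum_nonneg hg0
      have h5 := chip_eff (p i) x
      have h6 : chip x x = 1 := by simp [chip]
      linarith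
    obtain ⟨w, hw1, hw2, hw3, hw4⟩ := count hx hg0 hgx (fun z _ => hD0 z)
      (fun z hzz h0 => (hz z hzz h0).trans (by linarith [hE2 x (p i) z]))
    have hF0 : 0 ≤ ∑ w ∈ BB lev i, (D w - (chip x w + chip (p i) w) - G.laplacian f w) :=
      Finset.sum_nonneg fun w _ => hf w
    set s := ∑ z ∈ L, g z
    set FF := ∑ w ∈ BB lev i, (D w - (chip x w + chip (p i) w) - G.laplacian f w) with hFF
    have h3 : s * (N + 1 + L.card - w) ≤ N + L.card := by nlinarith
    have h4 : w * (N + 1 + L.card - w) ≤ s * (N + 1 + L.card - w) :=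
      mul_le_mul_of_nonneg_right hw3 (by linarith)
    have hw : w = 1 := by
      by_contra hw'
      have : 2 ≤ w := by omega
      nlinarith [mul_pos (by linarith : 0 < w - 1) (by linarith : (0:ℤ) < N + L.card - w)]
    subst hw
    have hs : s = 1 := by
      by_contra hs'
      have : 2 ≤ s := by omega
      nlinarith
    rw [hs] at hw4 hlow
    have hFz : FF = 0 := by linarith
    have hAe : A = N + 2 := by linarith
    have hDL : ∑ w ∈ L, D w = L.card - 1 := by linarith
    have hgz : ∀ z ∈ L, z ≠ x → g z = 0 := by
      intro z hzL hzx
      have := two_le hg0 hx hzL (Ne.symm hzx)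
      have := hg0 z hzL
      linarith
    have hDz : ∀ z ∈ L, z ≠ x → 1 ≤ D z := by
      intro z hzL hzx
      have h5 := hz z hzL (hgz z hzL hzx)
      rw [hs] at h5
      linarith [hE2 x (p i) z]
    have hDz1 : ∀ z ∈ L, z ≠ x → D z = 1 := by
      have h5 : ∑ z ∈ L, (D z - 1 + chip x z) = 0 := by
        rw [Finset.sum_add_distrib, Finset.sum_sub_distrib, chip_sum, if_pos hx, hDL]
        simp
      rw [Finset.sum_eq_zero_iff_of_nonneg] at h5
      · intro z hzL hzx
        have := h5 z hzL
        simp only [chip, if_neg hzx] at this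
        linarith
      · intro z hzL
        by_cases hzx : z = x
        · subst hzx
          have := hD0 z
          simp [chip]; exact this
        · have := hDz z hzL hzx
          simp [chip, hzx]; exact this
    by_cases hy : ∃ y ∈ L, y ≠ x
    · obtain ⟨y, hyL, hyx⟩ := hy
      obtain ⟨f2, hf2⟩ := win_lap (hr y y)
      obtain ⟨g2, -, hg20, hlow2, hz2⟩ := hcoreE y y f2 hf2
      rw [Finset.sum_add_distrib, chip_sum, if_neg (hLB y hyL)] at hlow2
      have hF20 : 0 ≤ ∑ w ∈ BB lev i, (D w - (chip y w + chip y w) - G.laplacian f2 w) :=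
        Finset.sum_nonneg fun w _ => hf2 w
      have hgy : 1 ≤ g2 y := by
        by_contra h1
        have h2 : g2 y = 0 := by linarith [hg20 y hyL, (by omega : g2 y ≤ 0)]
        have h3 := hz2 y hyL h2
        have h4 : 0 ≤ ∑ z ∈ L, g2 z := Finset.sum_nonneg hg20
        have h6 : chip y y = 1 := by simp [chip]
        rw [hDz1 y hyL hyx] at h3
        linarith
      have h7 := two_le hg20 hx hyL (Ne.symm hyx)
      have h8 := hg20 x hx
      have hs2 : ∑ z ∈ L, g2 z ≤ 1 := by
        by_contra hs'
        have : 2 ≤ ∑ z ∈ L, g2 z := by omega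
        nlinarith
      have h9 := hz2 x hx (by linarith)
      linarith [hE2 y y x]
    · push Not at hy
      have hLx : L = {x} := Finset.eq_singleton_iff_unique_mem.2 ⟨hx, hy⟩
      have hi1 : 1 ≤ i := by
        rcases hbig with hb | hb
        · exact hb
        · rw [hLx] at hb; simp at hb
      have hxp0 : p 0 ≠ x := by rintro rfl; omega
      have hpip0 : p 0 ≠ p i := by
        intro he; rw [he] at hp0; omega
      have e1 : D (p 0) - (chip x (p 0) + chip (p i) (p 0)) - G.laplacian f (p 0) = 0 :=
        (Finset.sum_eq_zero_iff_of_nonneg fun w _ => hf w).1 hFz (p 0) hp0B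
      simp only [chip, if_neg hxp0, if_neg hpip0] at e1
      obtain ⟨f3, hf3⟩ := win_lap (hr x (p 0))
      obtain ⟨g3, -, hg30, hlow3, hz3⟩ := hcoreE x (p 0) f3 hf3
      rw [Finset.sum_add_distrib, chip_sum, chip_sum, if_neg (hLB x hx), if_pos hp0B] at hlow3
      have hgx3 : 1 ≤ g3 x := by
        by_contra h1
        have h2 : g3 x = 0 := by linarith [hg30 x hx, (by omega : g3 x ≤ 0)]
        have h3 := hz3 x hx h2
        have h4 : 0 ≤ ∑ z ∈ L, g3 z := Finset.sum_nonneg hg30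
        have h5 := chip_eff (p 0) x
        have h6 : chip x x = 1 := by simp [chip]
        linarith
      have hs3 : 1 ≤ ∑ z ∈ L, g3 z := hgx3.trans (Finset.single_le_sum hg30 hx)
      have hF30 : 0 ≤ ∑ w ∈ BB lev i, (D w - (chip x w + chip (p 0) w) - G.laplacian f3 w) :=
        Finset.sum_nonneg fun w _ => hf3 w
      have hF3z : ∑ w ∈ BB lev i, (D w - (chip x w + chip (p 0) w) - G.laplacian f3 w) = 0 := by
        nlinarith
      have e2 : D (p 0) - (chip x (p 0) + chip (p 0) (p 0)) - G.laplacian f3 (p 0) = 0 :=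
        (Finset.sum_eq_zero_iff_of_nonneg fun w _ => hf3 w).1 hF3z (p 0) hp0B
      simp only [chip, if_neg hxp0, if_true] at e2
      have e3 := h.p0_even f
      have e4 := h.p0_even f3
      omega
  · push Not at hne
    have hq : (L.card : ℤ) ≤ ∑ w ∈ L, D w := by
      have : ∑ w ∈ L, (1:ℤ) ≤ ∑ w ∈ L, D w := Finset.sum_le_sum fun w hw => hne w hw
      simpa using this
    have hAe : A = N + 1 := by linarith
    have hDL : ∑ w ∈ L, D w = L.card := by linarith
    have hD1 : ∀ z ∈ L, D z = 1 := by
      have h5 : ∑ z ∈ L, (D z - 1) = 0 := by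
        rw [Finset.sum_sub_distrib, hDL]; simp
      rw [Finset.sum_eq_zero_iff_of_nonneg] at h5
      · intro z hzL
        have := h5 z hzL
        linarith
      · intro z hzL
        have := hne z hzL
        linarith
    set x := p (i+1) with hxdef
    have hlx : lev x = i + 1 := h.lev_p (i+1) le_rfl
    have hx : x ∈ L := by simp [hL, LL, hlx]
    obtain ⟨f, hf⟩ := win_lap (hr x x)
    obtain ⟨g, hgdef, hg0, hlow, hz⟩ := hcoreE x x f hf
    rw [Finset.sum_add_distrib, chip_sum, if_neg (hLB x hx)] at hlow
    have hF0 : 0 ≤ ∑ w ∈ BB lev i, (D w - (chip x w + chip x w) - G.laplacian f w) :=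
      Finset.sum_nonneg fun w _ => hf w
    have hgx : 1 ≤ g x := by
      by_contra h1
      have h2 : g x = 0 := by linarith [hg0 x hx, (by omega : g x ≤ 0)]
      have h3 := hz x hx h2
      have h4 : 0 ≤ ∑ z ∈ L, g z := Finset.sum_nonneg hg0
      have h6 : chip x x = 1 := by simp [chip]
      rw [hD1 x hx] at h3
      linarith
    have hs1 : 1 ≤ ∑ z ∈ L, g z := hgx.trans (Finset.single_le_sum hg0 hx)
    have hs : ∑ z ∈ L, g z = 1 := by
      by_contra hs'
      have : 2 ≤ ∑ z ∈ L, g z := by omega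
      nlinarith
    rw [hs] at hlow
    have hFz : ∑ w ∈ BB lev i, (D w - (chip x w + chip x w) - G.laplacian f w) = 0 := by
      linarith
    have hzero : ∀ w, w ≠ x → D w - G.laplacian f w = 0 := by
      intro w hwx
      by_cases hwB : w ∈ BB lev i
      · have := (Finset.sum_eq_zero_iff_of_nonneg fun w _ => hf w).1 hFz w hwB
        simpa [chip, hwx] using this
      · have hwL : lev w = i + 1 := by
          have h1 := h.lev_le w
          simp [BB] at hwB
          omega
        have hwL' : w ∈ L := by simp [hL, LL, hwL]
        have hgw : g w = 0 := by
          have := two_le hg0 hx hwL' (Ne.symm hwx)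
          have := hg0 w hwL'
          linarith
        have h2 : f w = f (p i) := by rw [hgdef w hwL'] at hgw; linarith
        have h3 := h.lap_at f i w hwL
        have h4 : LL lev (i+2) = ∅ := by
          ext v
          have := h.lev_le v
          simp [LL]; omega
        rw [h4, h2, ← Finset.sum_congr rfl hgdef, hs] at h3
        rw [h3, hD1 w hwL']; simp
    refine ⟨f, ?_⟩
    funext w
    simp only [Pi.sub_apply]
    split_ifs with hw
    · subst hw
      have h1 : ∑ w, (D w - G.laplacian f w) = D x - G.laplacian f x :=
        Finset.sum_eq_single x (fun w _ hw => hzero w hw) (by simp)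
      rw [Finset.sum_sub_distrib, degree_lap, hsplit] at h1
      rw [← h1, hcard]
      linarith
    · exact (hzero w hw).symm

end QBD
end Multigraph

namespace Multigraph
namespace QBD

variable {G : Multigraph V} {m : ℕ} {lev : V → ℕ} {p : ℕ → V}

/-- `(N+1) x` plus one chip on every vertex of higher level -/
def dd (lev : V → ℕ) (x : V) : V → ℤ := fun w =>
  (if w = x then (NN lev (lev x) : ℤ) + 1 else 0) + (if lev x < lev w then 1 else 0)

theorem dd_step (h : QBD G m lev p) (i : ℕ) (y : V) (hy : lev y = i + 1) :
    G.LinEquiv (dd lev (p i)) (dd lev y) := by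
  have him : i + 1 ≤ m := hy ▸ h.lev_le y
  have hpi := h.lev_p i (by omega)
  have hpi1 := h.lev_p (i+1) him
  let t : V → ℤ := fun w => if w = y ∨ (y = p (i+1) ∧ i + 1 < lev w) then 1 else 0
  have ty : t y = 1 := by simp [t]
  have tlow : ∀ w, lev w ≤ i + 1 → w ≠ y → t w = 0 := by
    intro w hw hwy
    have : ¬ (i + 1 < lev w) := by omega
    simp [t, hwy, this]
  have thigh : ∀ w, i + 1 < lev w → t w = if y = p (i+1) then 1 else 0 := by
    intro w hw
    have : w ≠ y := by rintro rfl; omega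
    simp [t, this, hw]
  refine ⟨-t, ?_⟩
  rw [laplacian_neg, sub_neg_eq_add]
  funext w
  simp only [Pi.add_apply]
  have hypi : y ≠ p i := by rintro rfl; omega
  have tpi : t (p i) = 0 := tlow _ (by omega) hypi.symm
  rcases lt_trichotomy (lev w) (i+1) with hw | hw | hw
  · -- low level
    have hwy : w ≠ y := by rintro rfl; omega
    have h1 : G.laplacian t w = (G.mult w y : ℤ) * (t w - t y) := by
      refine Finset.sum_eq_single y ?_ (by simp)
      intro u _ huy
      rw [tlow w (by omega) hwy]
      by_cases hu : lev u ≤ i + 1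
      · rw [tlow u hu huy]; simp
      · rw [h.zero w u (by omega) (by omega)]; simp
    rw [h1, ty, tlow w (by omega) hwy]
    by_cases hwp : w = p i
    · subst hwp
      rw [h.up i y hy]
      simp [dd, hy, hpi, hypi.symm]
    · rw [h.zero w y (by omega)]
      · have a1 : ¬ (i + 1 < lev w) := by omega
        have a2 : ¬ (i < lev w) := by omega
        simp [dd, hwy, hwp, hy, hpi, a1, a2]
      · rintro ⟨h9, h10⟩
        apply hwp; rw [h10]; congr 1; omega
  · rw [h.lap_at t i w hw, tpi]
    have hsum : ∑ z ∈ LL lev (i+1), t z = 1 := by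
      rw [Finset.sum_eq_single y, ty]
      · intro z hz hzy
        have : lev z = i + 1 := by simpa [LL] using hz
        exact tlow z (by omega) hzy
      · intro hn; exact absurd (by simp [LL, hy]) hn
    have hwp : w ≠ p i := by rintro rfl; omega
    have hthird : ∑ z ∈ LL lev (i+2), (G.mult w z : ℤ) * (t w - t z) = 0 := by
      refine Finset.sum_eq_zero fun z hz => ?_
      have hz' : lev z = i + 2 := by simpa [LL] using hz
      rw [thigh z (by omega)]
      by_cases hwp1 : w = p (i+1)
      · by_cases hyp : y = p (i+1)
        · rw [hwp1, ← hyp, ty]; simp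
        · rw [tlow w (by omega) (by rw [hwp1]; exact Ne.symm hyp)]; simp [hyp]
      · rw [h.zero w z (by omega)]
        · simp
        · rintro ⟨h9, h10⟩
          apply hwp1; rw [h10]; congr 1
    rw [hthird, Finset.sum_sub_distrib, hsum]
    have hNs := NN_succ lev i
    by_cases hwy : w = y
    · subst hwy
      rw [ty]
      simp [dd, hw, hpi, hwp, hNs]
      ring
    · rw [tlow w (by omega) hwy]
      simp [dd, hwy, hwp, hw, hpi, hy]
  · have hwy : w ≠ y := by rintro rfl; omega
    have hwp : w ≠ p i := by rintro rfl; omega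
    have h1 : G.laplacian t w = 0 := by
      refine Finset.sum_eq_zero fun u _ => ?_
      rw [thigh w hw]
      by_cases hu : i + 1 < lev u
      · rw [thigh u hu]; simp
      · by_cases hup : u = p (i+1)
        · by_cases hyp : y = p (i+1)
          · rw [hup, ← hyp, ty]; simp
          · rw [tlow u (by omega) (by rw [hup]; exact Ne.symm hyp)]; simp [hyp]
        · rw [G.symm, h.zero u w (by omega)]
          · simp
          · rintro ⟨h9, h10⟩
            apply hup; rw [h10]; congr 1; omega
    have a2 : i < lev w := by omega
    rw [h1]
    simp [dd, hwy, hwp, hy, hpi, hw, a2]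

theorem dd_p (h : QBD G m lev p) : ∀ i, i ≤ m → G.LinEquiv (dd lev (p 0)) (dd lev (p i)) := by
  intro i
  induction i with
  | zero => intro _; exact linEquiv_refl _ _
  | succ i ih =>
    intro hi
    exact (ih (by omega)).trans' (h.dd_step i _ (h.lev_p _ hi))

theorem dd_all (h : QBD G m lev p) (x : V) : G.LinEquiv (dd lev (p 0)) (dd lev x) := by
  by_cases h0 : lev x = 0
  · rw [h.lev0 x h0]; exact linEquiv_refl _ _
  · obtain ⟨i, hi⟩ : ∃ i, lev x = i + 1 := ⟨lev x - 1, by omega⟩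
    have := h.lev_le x
    exact (h.dd_p i (by omega)).trans' (h.dd_step i x hi)

theorem dd_eff (x : V) : Effective (dd lev x) := by
  intro w
  unfold dd
  split_ifs <;> positivity

theorem dd_zero (h : QBD G m lev p) (w : V) : dd lev (p 0) w = 1 + chip (p 0) w := by
  have hp0 := h.lev_p 0 (Nat.zero_le _)
  by_cases hw : w = p 0
  · subst hw
    simp [dd, chip, hp0, NN_eq, h.BB_zero]
  · have : 0 < lev w := by
      rcases Nat.eq_zero_or_pos (lev w) with h0 | h0
      · exact absurd (h.lev0 w h0) hw
      · exact h0
    simp [dd, chip, hw, hp0, this]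

theorem dd_deg (h : QBD G m lev p) : degree (dd lev (p 0)) = Fintype.card V + 1 := by
  rw [degree, Finset.sum_congr rfl fun w _ => h.dd_zero w, Finset.sum_add_distrib, chip_sum]
  simp

theorem eff_le_deg {E : V → ℤ} (hE : Effective E) (x : V) : E x ≤ degree E :=
  Finset.single_le_sum (fun w _ => hE w) (Finset.mem_univ x)

theorem dd_win (h : QBD G m lev p) (E : V → ℤ) (hE : Effective E) (hd : degree E = 2) :
    G.Winnable (fun w => dd lev (p 0) w - E w) := by
  by_cases hall : ∀ w, E w ≤ dd lev (p 0) w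
  · exact ⟨_, fun w => sub_nonneg.2 (hall w), linEquiv_refl _ _⟩
  · push Not at hall
    obtain ⟨x, hx⟩ := hall
    rw [h.dd_zero] at hx
    have h1 := chip_eff (p 0) x
    have h2 : E x = 2 := by
      have := eff_le_deg hE x
      omega
    refine ⟨_, ?_, (h.dd_all x).sub' E⟩
    intro w
    by_cases hwx : w = x
    · subst hwx
      have := h.NN_pos (lev w)
      simp only [dd, if_true, lt_irrefl, if_false]
      linarith
    · have h3 := two_le (L := univ) (fun z _ => hE z) (Finset.mem_univ x) (Finset.mem_univ w)
        (Ne.symm hwx)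
      have h4 : ∑ z, E z = 2 := hd
      have h5 := hE w
      have h6 : E w = 0 := by linarith
      simpa [h6] using dd_eff (lev := lev) x w

end QBD

/-- the set whose supremum is the rank -/
def rset (G : Multigraph V) (D : V → ℤ) : Set ℤ :=
  {r : ℤ | ∀ E : V → ℤ, Effective E → degree E = r → G.Winnable (fun w => D w - E w)}

theorem win_deg {G : Multigraph V} {D : V → ℤ} (h : G.Winnable D) : 0 ≤ degree D := by
  obtain ⟨E, hE, hl⟩ := h
  rw [← hl.degree']
  exact Finset.sum_nonneg fun w _ => hE w

open QBD in
theorem chips_deg (x : V) (r : ℤ) : degree (fun w => r * chip x w) = r := by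
  rw [degree, ← Finset.mul_sum, chip_sum]; simp

open QBD in
theorem rset_le {G : Multigraph V} {D : V → ℤ} (x : V) {r : ℤ} (hr : r ∈ G.rset D) :
    r ≤ max (degree D) 0 := by
  by_cases h0 : 0 ≤ r
  · have := win_deg (hr (fun w => r * chip x w) (fun w => mul_nonneg h0 (chip_eff x w))
      (chips_deg x r))
    have h1 : degree (fun w => D w - r * chip x w) = degree D - r := by
      conv_rhs => rw [← chips_deg x r]
      simp [degree, Finset.sum_sub_distrib]
    rw [h1] at this
    exact le_max_of_le_left (by linarith)
  · exact le_max_of_le_right (by omega)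

theorem rank_mem (G : Multigraph V) (D : V → ℤ) (x : V) : G.rank D ∈ G.rset D := by
  refine Int.csSup_mem ⟨-1, ?_⟩ ⟨max (degree D) 0, fun r hr => rset_le x hr⟩
  intro E hE hd
  have : 0 ≤ degree E := Finset.sum_nonneg fun w _ => hE w
  omega

theorem rank_eq {G : Multigraph V} {D : V → ℤ} {k : ℤ} (hk : k ∈ G.rset D)
    (hle : ∀ r ∈ G.rset D, r ≤ k) : G.rank D = k :=
  IsGreatest.csSup_eq (s := G.rset D) ⟨hk, hle⟩

namespace QBD

variable {G : Multigraph V} {m : ℕ} {lev : V → ℕ} {p : ℕ → V}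

theorem rset_bound (h : QBD G m lev p) {D : V → ℤ} {r : ℤ} (h1 : 1 ≤ r) (hr : r ∈ G.rset D) :
    (Fintype.card V : ℤ) + r - 1 ≤ degree D := by
  have := h.gon1 (D := fun w => D w - (r - 1) * chip (p 0) w) (fun x => by
    have := hr (fun w => (r - 1) * chip (p 0) w + chip x w)
      (fun w => add_nonneg (mul_nonneg (by linarith) (chip_eff _ w)) (chip_eff _ w))
      (by
        have h2 := chips_deg (p 0) (r-1)
        have h3 := chips_deg x 1
        simp only [degree, one_mul] at h2 h3 ⊢
        rw [Finset.sum_add_distrib, h2, h3]; ring)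
    simpa only [sub_sub] using this)
  have h1 : degree (fun w => D w - (r-1) * chip (p 0) w) = degree D - (r-1) := by
    conv_rhs => rw [← chips_deg (p 0) (r-1)]
    simp [degree, Finset.sum_sub_distrib]
  linarith

theorem gonality_one (h : QBD G m lev p) : G.gonality 1 = Fintype.card V := by
  refine IsLeast.csInf_eq ⟨⟨fun _ => 1, rank_eq ?_ ?_, by simp [degree]⟩, ?_⟩
  · intro E hE hd
    exact ⟨_, fun w => sub_nonneg.2 (hd ▸ eff_le_deg hE w), linEquiv_refl _ _⟩
  · intro r hr
    by_contra hlt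
    have := h.rset_bound (by omega) hr
    simp [degree] at this
    omega
  · rintro d ⟨D, hD, rfl⟩
    have h1 := rank_mem G D (p 0)
    rw [hD] at h1
    have := h.rset_bound le_rfl h1
    linarith

theorem gonality_two (h : QBD G m lev p) : G.gonality 2 ≤ Fintype.card V + 1 := by
  refine csInf_le ⟨0, ?_⟩ ⟨dd lev (p 0), rank_eq h.dd_win ?_, h.dd_deg⟩
  · rintro d ⟨D, hD, rfl⟩
    have h1 := rank_mem G D (p 0)
    rw [hD] at h1
    have := h.rset_bound (by norm_num) h1
    have : (0:ℤ) ≤ Fintype.card V := Int.natCast_nonneg _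
    linarith
  · intro r hr
    by_contra hlt
    have := h.rset_bound (by omega) hr
    rw [h.dd_deg] at this
    omega

theorem main (h : QBD G m lev p) (hn : Fintype.card V ≠ 2)
    (D D' : V → ℤ) (hD : G.Realises 2 D) (hD' : G.Realises 2 D') : G.LinEquiv D D' := by
  rcases m with _ | i
  · have h0 : ∀ x, x = p 0 := fun x => h.lev0 x (Nat.le_zero.1 (h.lev_le x))
    have h1 : ∀ F : V → ℤ, degree F = F (p 0) := fun F =>
      Finset.sum_eq_single (p 0) (fun b _ hb => absurd (h0 b) hb) (by simp)
    have h2 : D = D' := by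
      funext x
      rw [h0 x, ← h1 D, ← h1 D', hD.2, hD'.2]
    rw [h2]; exact linEquiv_refl _ _
  · have hbig : 1 ≤ i ∨ 2 ≤ (LL lev (i+1)).card := by
      by_contra hcon
      push Not at hcon
      obtain ⟨h1, h2⟩ := hcon
      have hi : i = 0 := by omega
      subst hi
      have h3 : 0 < (LL lev (0+1)).card :=
        Finset.card_pos.2 ⟨p 1, by simp [LL, h.lev_p 1 le_rfl]⟩
      have h4 := NN_succ lev 0
      rw [h.NN_top, NN_eq, h.BB_zero] at h4
      rw [Finset.card_singleton] at h4
      omega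
    have key : ∀ D : V → ℤ, G.Realises 2 D →
        G.LinEquiv D (fun w => if w = p (i+1) then (Fintype.card V : ℤ) + 1 else 0) := by
      intro D hD
      have h1 := rank_mem G D (p 0)
      rw [hD.1] at h1
      have hr : ∀ x y, G.Winnable (fun w => D w - (chip x w + chip y w)) := fun x y =>
        h1 _ (fun w => add_nonneg (chip_eff x w) (chip_eff y w)) (by
          rw [degree, Finset.sum_add_distrib, chip_sum, chip_sum]; simp)
      have hwin : G.Winnable D := win_of_sub
        (E := fun w => chip (p 0) w + chip (p 0) w)
        (fun w => add_nonneg (chip_eff _ w) (chip_eff _ w)) (hr (p 0) (p 0))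
      obtain ⟨D1, hl, hE, hR⟩ := h.exists_reduced hwin
      refine hl.trans' (h.gon2 hbig hE hR (fun x y => (hr x y).congr' (hl.sub' _)) ?_)
      rw [hl.degree', hD.2]
      exact h.gonality_two
    exact (key D hD).trans' (key D' hD').symm'

end QBD

theorem exists_QBD {G : Multigraph V} (hG : Nonempty V) (hQB : G.IsQuasiBanana) :
    ∃ m lev p, QBD G m lev p := by
  obtain ⟨m, q, ℓ, hq, hinj, hrange, hsurj, hmult⟩ := hQB
  have hex : ∀ i, ∃ v, i ≤ m → ℓ v = (i, 1) := by
    intro i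
    by_cases hi : i ≤ m
    · obtain ⟨v, hv⟩ := hsurj i 1 hi le_rfl (by
        unfold qbSize
        split_ifs with h0
        · exact le_rfl
        · exact hq i (by omega) hi)
      exact ⟨v, fun _ => hv⟩
    · exact ⟨hG.some, fun h => absurd h hi⟩
  choose p hp using hex
  let lev : V → ℕ := fun v => (ℓ v).1
  have hlevp : ∀ i, i ≤ m → lev (p i) = i := fun i hi => by simp [lev, hp i hi]
  have hpeq : ∀ x, (ℓ x).2 = 1 → x = p (lev x) := by
    intro x hx
    apply hinj
    rw [hp _ (hrange x).1]
    exact Prod.ext rfl hx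
  have hlev0 : ∀ x, lev x = 0 → x = p 0 := by
    intro x hx
    have h1 := hrange x
    have h2 : (ℓ x).1 = 0 := hx
    rw [h2] at h1
    simp only [qbSize, if_true] at h1
    have := hpeq x (by omega)
    rwa [hx] at this
  have hcardL : ∀ i, i + 1 ≤ m → (LL lev (i+1)).card = q (i+1) := by
    intro i hi
    have h1 : (LL lev (i+1)).card = (Finset.Icc 1 (q (i+1))).card := by
      refine Finset.card_bij (fun v _ => (ℓ v).2) ?_ ?_ ?_
      · intro v hv
        have hv' : (ℓ v).1 = i + 1 := by simpa [LL] using hv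
        have h2 := hrange v
        rw [hv'] at h2
        simpa [qbSize] using h2.2
      · intro v hv w hw he
        have hv' : (ℓ v).1 = i + 1 := by simpa [LL] using hv
        have hw' : (ℓ w).1 = i + 1 := by simpa [LL] using hw
        exact hinj (Prod.ext (hv'.trans hw'.symm) he)
      · intro j hj
        rw [Finset.mem_Icc] at hj
        obtain ⟨v, hv⟩ := hsurj (i+1) j hi hj.1 (by simpa [qbSize] using hj.2)
        exact ⟨v, by simp [LL, lev, hv], by simp [hv]⟩
    simpa using h1
  have hNN : ∀ i, i ≤ m → ∑ k ∈ Finset.Icc 1 i, q k + 1 = NN lev i := by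
    intro i
    induction i with
    | zero =>
      intro _
      have : BB lev 0 = {p 0} := by
        ext x
        simp only [BB, Finset.mem_filter, Finset.mem_univ, true_and, Finset.mem_singleton]
        constructor
        · intro hx; exact hlev0 x (by omega)
        · rintro rfl; rw [hlevp 0 (Nat.zero_le _)]
      rw [NN_eq, this]; simp
    | succ i ih =>
      intro hi
      have h1 := ih (by omega)
      have h2 := NN_succ lev i
      rw [hcardL i hi] at h2
      rw [Finset.sum_Icc_succ_top (by omega)]
      omega
  refine ⟨m, lev, p, fun x => (hrange x).1, hlevp, hlev0, ?_, ?_, ?_⟩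
  · intro x y hxy hl
    rw [hmult x y hxy, if_pos hl]
  · intro i y hy
    have hi : i + 1 ≤ m := hy ▸ (hrange y).1
    have hne : p i ≠ y := by
      intro he; have := hlevp i (by omega); rw [he] at this; omega
    have hy' : (ℓ y).1 = i + 1 := hy
    rw [hmult _ _ hne, hp i (by omega), hy', if_neg (by simp), if_pos (by simp),
      ← hNN i (by omega)]
  · intro x y hlt hn
    have hne : x ≠ y := by rintro rfl; exact lt_irrefl _ hlt
    have hlt' : (ℓ x).1 < (ℓ y).1 := hlt
    rw [hmult x y hne, if_neg (by omega), if_neg, if_neg (by omega)]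
    rintro ⟨h1, h2⟩
    exact hn ⟨h1.symm, hpeq x h2⟩

end Multigraph

/-- On a quasi-banana graph with first gonality `k ≠ 2`, any two divisors
realising the second gonality are linearly equivalent. -/
theorem stmt3 (G : Multigraph V) (hG : G.Connected) (hQB : G.IsQuasiBanana)
    (k : ℕ) (hk : G.gonality 1 = (k : ℤ)) (hk2 : k ≠ 2)
    (D D' : V → ℤ) (hD : G.Realises 2 D) (hD' : G.Realises 2 D') :
    G.LinEquiv D D' := by
  obtain ⟨m, lev, p, h⟩ := Multigraph.exists_QBD hG.1 hQB
  refine h.main ?_ D D' hD hD'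
  intro hc
  rw [h.gonality_one] at hk
  have hk' : Fintype.card V = k := by exact_mod_cast hk
  exact hk2 (hk'.symm.trans hc)
end

section
/- Let G be a quasi-banana graph with first gonality gon_1(G) = k, and let D be a divisor on G realising the second gonality. Then for every integer l with -1 ≤ l ≤ k, the rank of l·D equals l(l+3)/2. In particular, (k-2)·D is linearly equivalent to the canonical divisor K_G. -/
open Finset

variable {V : Type*} [Fintype V] [DecidableEq V]

namespace QBProof
open Multigraph

section General
variable (G : Multigraph V)

lemma lap_add (f g : V → ℤ) : G.laplacian (f + g) = G.laplacian f + G.laplacian g := by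
  funext w
  simp only [laplacian, Pi.add_apply, ← Finset.sum_add_distrib]
  exact Finset.sum_congr rfl fun u _ => by ring

lemma lap_smul (c : ℤ) (f : V → ℤ) : G.laplacian (fun w => c * f w) = fun w => c * G.laplacian f w := by
  funext w
  simp only [laplacian, Finset.mul_sum]
  exact Finset.sum_congr rfl fun u _ => by ring

lemma lap_zero : G.laplacian (fun _ => 0) = fun _ => 0 := by
  funext w
  simp [laplacian]

lemma deg_lap (f : V → ℤ) : ∑ w, G.laplacian f w = 0 := by
  have h1 : ∑ w, G.laplacian f w = ∑ w, ∑ u, (G.mult w u : ℤ) * (f w - f u) := rfl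
  have h2 : ∑ w, ∑ u, (G.mult w u : ℤ) * (f w - f u) =
      ∑ w, ∑ u, (G.mult u w : ℤ) * (f u - f w) := Finset.sum_comm
  have h3 : ∑ w, ∑ u, (G.mult u w : ℤ) * (f u - f w) =
      - ∑ w, ∑ u, (G.mult w u : ℤ) * (f w - f u) := by
    simp only [← Finset.sum_neg_distrib]
    refine Finset.sum_congr rfl fun u _ => Finset.sum_congr rfl fun w _ => ?_
    rw [G.symm]; ring
  linarith

lemma le_refl' (A : V → ℤ) : G.LinEquiv A A := by
  refine ⟨fun _ => 0, ?_⟩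
  rw [lap_zero]; funext w; simp

lemma le_symm {A B : V → ℤ} (h : G.LinEquiv A B) : G.LinEquiv B A := by
  obtain ⟨f, hf⟩ := h
  refine ⟨fun w => (-1) * f w, ?_⟩
  rw [lap_smul, hf]; funext w; simp

lemma le_trans' {A B C : V → ℤ} (h : G.LinEquiv A B) (h' : G.LinEquiv B C) : G.LinEquiv A C := by
  obtain ⟨f, hf⟩ := h
  obtain ⟨g, hg⟩ := h'
  refine ⟨f + g, ?_⟩
  rw [lap_add, hg, hf]; funext w; simp; ring

lemma le_add {A B C D : V → ℤ} (h : G.LinEquiv A B) (h' : G.LinEquiv C D) :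
    G.LinEquiv (fun w => A w + C w) (fun w => B w + D w) := by
  obtain ⟨f, hf⟩ := h
  obtain ⟨g, hg⟩ := h'
  refine ⟨f + g, ?_⟩
  rw [lap_add, hg, hf]; funext w; simp; ring

lemma le_smul {A B : V → ℤ} (c : ℤ) (h : G.LinEquiv A B) :
    G.LinEquiv (fun w => c * A w) (fun w => c * B w) := by
  obtain ⟨f, hf⟩ := h
  refine ⟨fun w => c * f w, ?_⟩
  rw [lap_smul, hf]; funext w; simp; ring

lemma le_deg {A B : V → ℤ} (h : G.LinEquiv A B) : ∑ w, A w = ∑ w, B w := by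
  obtain ⟨f, hf⟩ := h
  rw [hf]
  simp [Finset.sum_sub_distrib, deg_lap]

lemma win_congr {A B : V → ℤ} (h : G.LinEquiv A B) (hA : G.Winnable A) : G.Winnable B := by
  obtain ⟨E, hE, hAE⟩ := hA
  exact ⟨E, hE, le_trans' G (le_symm G h) hAE⟩

lemma win_eff {A : V → ℤ} (h : ∀ w, 0 ≤ A w) : G.Winnable A := ⟨A, h, le_refl' G A⟩

lemma win_mono {A B : V → ℤ} (h : ∀ w, A w ≤ B w) (hA : G.Winnable A) : G.Winnable B := by
  obtain ⟨E, hE, f, hf⟩ := hA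
  refine ⟨B - G.laplacian f, fun w => ?_, f, rfl⟩
  have := hE w
  rw [hf] at this
  have := h w
  simp at *
  linarith

lemma win_deg {A : V → ℤ} (h : G.Winnable A) : 0 ≤ ∑ w, A w := by
  obtain ⟨E, hE, hl⟩ := h
  rw [le_deg G hl]
  exact Finset.sum_nonneg fun w _ => hE w

lemma win_deg_zero {A : V → ℤ} (h : G.Winnable A) (h0 : ∑ w, A w ≤ 0) :
    G.LinEquiv A (fun _ => 0) := by
  obtain ⟨E, hE, hl⟩ := h
  rw [le_deg G hl] at h0
  have h1 := (Finset.sum_eq_zero_iff_of_nonneg (fun w _ => hE w)).1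
    (_root_.le_antisymm h0 (Finset.sum_nonneg fun w _ => hE w))
  have : E = fun _ => 0 := by funext w; exact h1 w (Finset.mem_univ w)
  rwa [this] at hl

/-- Unwinnability certificate from an ordering of the vertices. -/
lemma not_win_of_order [Nonempty V] (o : V → ℕ) (A : V → ℤ)
    (h : ∀ w, A w < ∑ u ∈ univ.filter (fun u => o u < o w), (G.mult w u : ℤ)) :
    ¬ G.Winnable A := by
  rintro ⟨E, hE, f, hf⟩
  obtain ⟨x, -, hx⟩ := Finset.exists_max_image univ f Finset.univ_nonempty
  obtain ⟨w, hw, hwm⟩ := Finset.exists_min_image (univ.filter fun u => f u = f x) o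
    ⟨x, by simp⟩
  simp only [mem_filter, mem_univ, true_and] at hw hwm
  have h1 : ∑ u ∈ univ.filter (fun u => o u < o w), (G.mult w u : ℤ) ≤ G.laplacian f w := by
    rw [Finset.sum_filter]
    refine Finset.sum_le_sum fun u _ => ?_
    have hu := hx u (mem_univ u)
    split_ifs with hlt
    · have : f u ≠ f x := fun he => by have := hwm u he; omega
      have h2 : 1 ≤ f w - f u := by omega
      nlinarith [Int.natCast_nonneg (G.mult w u)]
    · have h2 : 0 ≤ f w - f u := by omega
      positivity
  have h3 := hE w
  have h4 := h w
  rw [hf] at h3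
  simp at h3
  linarith

/-- Characterisation of rank. -/
lemma rank_eq [Nonempty V] (A : V → ℤ) (r : ℤ)
    (h1 : ∀ E : V → ℤ, Effective E → degree E = r → G.Winnable (fun w => A w - E w))
    (h2 : ∃ E : V → ℤ, Effective E ∧ degree E = r + 1 ∧ ¬ G.Winnable (fun w => A w - E w)) :
    G.rank A = r := by
  refine IsGreatest.csSup_eq ⟨h1, ?_⟩
  intro s hs
  by_contra hlt
  push Not at hlt
  obtain ⟨E, hE, hd, hn⟩ := h2
  obtain ⟨x⟩ := ‹Nonempty V›
  apply hn
  have := hs (fun w => E w + if w = x then s - r - 1 else 0) (fun w => by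
    have := hE w
    dsimp only
    split_ifs <;> omega) (by
    simp only [degree] at *
    rw [Finset.sum_add_distrib, hd]
    simp)
  refine win_mono G (fun w => ?_) this
  split_ifs <;> omega

lemma rank_mem [Nonempty V] (A : V → ℤ) (r : ℤ) (h : G.rank A = r) :
    ∀ E : V → ℤ, Effective E → degree E = r → G.Winnable (fun w => A w - E w) := by
  have hne : (-1 : ℤ) ∈ {r : ℤ | ∀ E : V → ℤ, Effective E → degree E = r →
      G.Winnable (fun w => A w - E w)} := by
    intro E hE hd
    have : 0 ≤ degree E := Finset.sum_nonneg fun w _ => hE w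
    omega
  have hb : BddAbove {r : ℤ | ∀ E : V → ℤ, Effective E → degree E = r →
      G.Winnable (fun w => A w - E w)} := by
    refine ⟨max 0 (∑ w, A w), ?_⟩
    intro s hs
    by_contra hlt
    push Not at hlt
    obtain ⟨x⟩ := ‹Nonempty V›
    have h0 : 0 < s := lt_of_le_of_lt (le_max_left _ _) hlt
    have h1 : ∑ w, A w < s := lt_of_le_of_lt (le_max_right _ _) hlt
    have := win_deg G (hs (fun w => if w = x then s else 0) (fun w => by
      dsimp only
      split_ifs <;> omega) (by simp [degree]))
    rw [Finset.sum_sub_distrib] at this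
    simp at this
    omega
  have := Int.csSup_mem ⟨_, hne⟩ hb
  rw [← h]
  exact this

lemma rank_congr {A B : V → ℤ} (h : G.LinEquiv A B) : G.rank A = G.rank B := by
  unfold rank
  congr 1
  ext r
  have key : ∀ {A B : V → ℤ}, G.LinEquiv A B → ∀ E : V → ℤ,
      G.Winnable (fun w => A w - E w) → G.Winnable (fun w => B w - E w) := by
    intro A B h E hw
    have := le_add G h (le_refl' G (fun w => - E w))
    simp only [← sub_eq_add_neg] at this
    exact win_congr G this hw
  exact ⟨fun hA E hE hd => key h E (hA E hE hd),
    fun hA E hE hd => key (le_symm G h) E (hA E hE hd)⟩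

end General

set_option linter.unusedSectionVars false

/-- Working presentation of the quasi-banana structure. -/
structure QBS (G : Multigraph V) (m : ℕ) (lev : V → ℕ) (t : ℕ → V) (N : ℕ → ℤ) : Prop where
  lev_le : ∀ v, lev v ≤ m
  lev_t : ∀ i, i ≤ m → lev (t i) = i
  N0 : N 0 = 1
  lev0 : ∀ v, lev v = 0 → v = t 0
  Nsucc : ∀ i, i < m → N (i + 1) = N i + ((univ.filter fun v => lev v = i + 1).card : ℤ)
  mult_same : ∀ v w, v ≠ w → lev v = lev w → G.mult v w = 1
  mult_up : ∀ v w, lev w = lev v + 1 →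
    (G.mult v w : ℤ) = if v = t (lev v) then N (lev v) + 1 else 0
  mult_far : ∀ v w, lev v + 1 < lev w → G.mult v w = 0

section Struct
variable {G : Multigraph V} {m : ℕ} {lev : V → ℕ} {t : ℕ → V} {N : ℕ → ℤ}

/-- The vertices of a given level. -/
abbrev Cl (lev : V → ℕ) (i : ℕ) : Finset V := univ.filter fun v => lev v = i

lemma mem_Cl {x : V} {i : ℕ} : x ∈ Cl lev i ↔ lev x = i := by simp [Cl]

lemma lap_formula (H : QBS G m lev t N) (f : V → ℤ) (w : V) :
    G.laplacian f w = ∑ u ∈ Cl lev (lev w), (f w - f u)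
      + (if 0 < lev w then (N (lev w - 1) + 1) * (f w - f (t (lev w - 1))) else 0)
      + (if w = t (lev w) then (N (lev w) + 1) * ∑ u ∈ Cl lev (lev w + 1), (f w - f u) else 0) := by
  have e2 : (if 0 < lev w then (N (lev w - 1) + 1) * (f w - f (t (lev w - 1))) else 0)
      = ∑ u, if 0 < lev w ∧ u = t (lev w - 1) then (N (lev w - 1) + 1) * (f w - f u) else 0 := by
    by_cases h0 : 0 < lev w <;> simp [h0]
  have e3 : (if w = t (lev w) then (N (lev w) + 1) * ∑ u ∈ Cl lev (lev w + 1), (f w - f u) else 0)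
      = ∑ u, if lev u = lev w + 1 then (if w = t (lev w) then (N (lev w) + 1) * (f w - f u) else 0)
        else 0 := by
    by_cases h0 : w = t (lev w)
    · rw [if_pos h0, Finset.mul_sum, Finset.sum_filter]
      simp only [if_pos h0]
    · simp only [if_neg h0]
      simp
  rw [e2, e3, Finset.sum_filter, ← Finset.sum_add_distrib, ← Finset.sum_add_distrib]
  refine Finset.sum_congr rfl fun u _ => ?_
  rcases lt_trichotomy (lev u) (lev w) with h | h | h
  · have h1 : lev u ≠ lev w := by omega
    have h2 : lev u ≠ lev w + 1 := by omega
    rw [if_neg h1, if_neg h2]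
    by_cases h3 : lev w = lev u + 1
    · have := H.mult_up u w h3
      rw [G.symm, this]
      have h4 : lev w - 1 = lev u := by omega
      have h5 : 0 < lev w := by omega
      simp only [h4, h5, true_and]
      split_ifs <;> simp
    · have := H.mult_far u w (by omega)
      rw [G.symm, this]
      rw [if_neg]
      · simp
      · rintro ⟨h5, rfl⟩
        have := H.lev_le w
        have := H.lev_t (lev w - 1) (by omega)
        omega
  · rw [if_pos h, if_neg (by omega : lev u ≠ lev w + 1), if_neg]
    · by_cases huw : w = u
      · subst huw; simp
      · rw [H.mult_same w u huw h.symm]; simp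
    · rintro ⟨h5, rfl⟩
      have := H.lev_le w
      have := H.lev_t (lev w - 1) (by omega)
      omega
  · rw [if_neg (by omega : lev u ≠ lev w)]
    have h6 : ¬ (0 < lev w ∧ u = t (lev w - 1)) := by
      rintro ⟨h5, rfl⟩
      have := H.lev_le w
      have := H.lev_t (lev w - 1) (by omega)
      omega
    rw [if_neg h6]
    by_cases h3 : lev u = lev w + 1
    · rw [H.mult_up w u h3, if_pos h3]
      split_ifs <;> simp
    · rw [H.mult_far w u (by omega), if_neg h3]
      simp

/-- Firing script supported above level `i`. -/
lemma lap_script (H : QBS G m lev t N) {i : ℕ} (hi : i < m) (h : V → ℤ) (w : V) :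
    G.laplacian (fun v => if lev v ≤ i then 0 else if lev v = i + 1 then h v else h (t (i + 1))) w =
      (if lev w = i + 1 then (N (i + 1) + 1) * h w - ∑ u ∈ Cl lev (i + 1), h u else 0)
      - (if w = t i then (N i + 1) * ∑ u ∈ Cl lev (i + 1), h u else 0) := by
  have ht := H.lev_t
  have hti := ht i hi.le
  have hti1 := ht (i+1) hi
  have hw := H.lev_le w
  set F : V → ℤ := fun v => if lev v ≤ i then 0 else if lev v = i + 1 then h v else h (t (i + 1))
    with hF
  rw [lap_formula H]
  have F1 : ∀ v, lev v ≤ i → F v = 0 := fun v hv => by simp only [hF, if_pos hv]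
  have F2 : ∀ v, lev v = i + 1 → F v = h v := fun v hv => by
    simp only [hF, if_neg (show ¬ lev v ≤ i by omega), if_pos hv]
  have F3 : ∀ v, i + 1 < lev v → F v = h (t (i + 1)) := fun v hv => by
    simp only [hF, if_neg (show ¬ lev v ≤ i by omega), if_neg (show lev v ≠ i + 1 by omega)]
  rcases lt_trichotomy (lev w) (i + 1) with hl | hl | hl
  · have s1 : ∑ u ∈ Cl lev (lev w), (F w - F u) = 0 := Finset.sum_eq_zero fun u hu => by
      rw [F1 w (by omega), F1 u (by rw [mem_Cl] at hu; omega)]; simp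
    have s2 : (if 0 < lev w then (N (lev w - 1) + 1) * (F w - F (t (lev w - 1))) else 0) = 0 := by
      rw [F1 w (by omega), F1 (t (lev w - 1)) (by rw [ht _ (by omega)]; omega)]; simp
    rw [s1, s2, if_neg (by omega : lev w ≠ i + 1)]
    by_cases hwi : lev w = i
    · rw [hwi]
      by_cases hwt : w = t i
      · rw [if_pos hwt, if_pos hwt]
        have : ∑ u ∈ Cl lev (i + 1), (F w - F u) = - ∑ u ∈ Cl lev (i + 1), h u := by
          rw [← Finset.sum_neg_distrib]
          refine Finset.sum_congr rfl fun u hu => ?_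
          rw [F1 w (by omega), F2 u (by rwa [mem_Cl] at hu)]; ring
        rw [this]; ring
      · rw [if_neg hwt, if_neg hwt]; simp
    · have hwt : w ≠ t i := by rintro rfl; omega
      rw [if_neg hwt]
      have : ∑ u ∈ Cl lev (lev w + 1), (F w - F u) = 0 := Finset.sum_eq_zero fun u hu => by
        rw [F1 w (by omega), F1 u (by rw [mem_Cl] at hu; omega)]; simp
      rw [this]; simp
  · have hwt : w ≠ t i := by rintro rfl; omega
    rw [if_neg hwt, hl, if_pos rfl, if_pos (Nat.succ_pos i)]
    have s3 : (if w = t (i + 1) then (N (i + 1) + 1) * ∑ u ∈ Cl lev (i + 1 + 1), (F w - F u)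
        else 0) = 0 := by
      split_ifs with hwt
      · have : ∑ u ∈ Cl lev (i + 1 + 1), (F w - F u) = 0 := Finset.sum_eq_zero fun u hu => by
          rw [F2 w hl, F3 u (by rw [mem_Cl] at hu; omega), hwt]; simp
        rw [this]; simp
      · rfl
    have s1 : ∑ u ∈ Cl lev (i + 1), (F w - F u) =
        ((Cl lev (i + 1)).card : ℤ) * h w - ∑ u ∈ Cl lev (i + 1), h u := by
      rw [← nsmul_eq_mul, ← Finset.sum_const, ← Finset.sum_sub_distrib]
      refine Finset.sum_congr rfl fun u hu => ?_
      rw [F2 w hl, F2 u (by rwa [mem_Cl] at hu)]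
    rw [s3, s1, F2 w hl, F1 (t (i + 1 - 1)) (by rw [ht _ (by omega)]; omega), H.Nsucc i hi]
    simp only [Nat.add_sub_cancel]
    ring
  · have hwt : w ≠ t i := by rintro rfl; omega
    rw [if_neg hwt, if_neg (by omega : lev w ≠ i + 1), F3 w hl]
    have s1 : ∑ u ∈ Cl lev (lev w), (h (t (i+1)) - F u) = 0 := Finset.sum_eq_zero fun u hu => by
      rw [F3 u (by rw [mem_Cl] at hu; omega)]; simp
    have s3 : ∑ u ∈ Cl lev (lev w + 1), (h (t (i+1)) - F u) = 0 := Finset.sum_eq_zero fun u hu => by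
      rw [F3 u (by rw [mem_Cl] at hu; omega)]; simp
    have s2 : F (t (lev w - 1)) = h (t (i + 1)) := by
      by_cases h7 : lev w = i + 2
      · rw [h7, show i + 2 - 1 = i + 1 by omega]; exact F2 _ hti1
      · exact F3 _ (by rw [ht _ (by omega)]; omega)
    rw [s1, s2, s3]; simp

lemma lap_const_above (H : QBS G m lev t N) {i : ℕ} (hi : i ≤ m) (f : V → ℤ) (w : V) :
    G.laplacian (fun v => if lev v ≤ i then f v else f (t i)) w =
      if lev w ≤ i then (if w = t i then ∑ u ∈ Cl lev i, (f w - f u)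
        + (if 0 < i then (N (i - 1) + 1) * (f w - f (t (i - 1))) else 0)
        else G.laplacian f w) else 0 := by
  have ht := H.lev_t
  have hti := ht i hi
  have hw := H.lev_le w
  set F : V → ℤ := fun v => if lev v ≤ i then f v else f (t i) with hF
  rw [lap_formula H]
  have F1 : ∀ v, lev v ≤ i → F v = f v := fun v hv => by simp only [hF, if_pos hv]
  have F2 : ∀ v, i < lev v → F v = f (t i) := fun v hv => by
    simp only [hF, if_neg (show ¬ lev v ≤ i by omega)]
  by_cases hl : lev w ≤ i
  · have s1 : ∑ u ∈ Cl lev (lev w), (F w - F u) = ∑ u ∈ Cl lev (lev w), (f w - f u) :=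
      Finset.sum_congr rfl fun u hu => by
        rw [F1 w (by omega), F1 u (by rw [mem_Cl] at hu; omega)]
    have s2 : F (t (lev w - 1)) = f (t (lev w - 1)) := F1 _ (by rw [ht _ (by omega)]; omega)
    rw [if_pos hl, s1, s2, F1 w hl]
    by_cases hwt : w = t i
    · have hlw : lev w = i := by rw [hwt, hti]
      have s3 : ∑ u ∈ Cl lev (i + 1), (f w - F u) = 0 := Finset.sum_eq_zero fun u hu => by
        rw [F2 u (by rw [mem_Cl] at hu; omega), hwt]; simp
      rw [if_pos hwt, hlw, s3]
      simp
    · rw [if_neg hwt, lap_formula H]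
      congr 1
      by_cases hwt' : w = t (lev w)
      · rw [if_pos hwt', if_pos hwt']
        congr 1
        refine Finset.sum_congr rfl fun u hu => ?_
        rw [F1 u]
        rw [mem_Cl] at hu
        have : lev w ≠ i := fun h => hwt (by rw [hwt', h])
        omega
      · rw [if_neg hwt', if_neg hwt']
  · rw [if_neg hl, F2 w (by omega)]
    have s1 : ∑ u ∈ Cl lev (lev w), (f (t i) - F u) = 0 := Finset.sum_eq_zero fun u hu => by
      rw [F2 u (by rw [mem_Cl] at hu; omega)]; simp
    have s3 : ∑ u ∈ Cl lev (lev w + 1), (f (t i) - F u) = 0 := Finset.sum_eq_zero fun u hu => by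
      rw [F2 u (by rw [mem_Cl] at hu; omega)]; simp
    have s2 : F (t (lev w - 1)) = f (t i) := by
      by_cases h7 : lev w = i + 1
      · rw [h7, show i + 1 - 1 = i by omega]; exact F1 _ hti.le
      · exact F2 _ (by rw [ht _ (by omega)]; omega)
    rw [s1, s2, s3]; simp

/-- Linear equivalence from a firing script at level `i+1`. -/
lemma script_equiv (H : QBS G m lev t N) {i : ℕ} (hi : i < m) (A h : V → ℤ) :
    G.LinEquiv A (fun w => A w
      - (if lev w = i + 1 then (N (i + 1) + 1) * h w - ∑ u ∈ Cl lev (i + 1), h u else 0)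
      + (if w = t i then (N i + 1) * ∑ u ∈ Cl lev (i + 1), h u else 0)) := by
  refine ⟨fun v => if lev v ≤ i then 0 else if lev v = i + 1 then h v else h (t (i + 1)), ?_⟩
  funext w
  rw [Pi.sub_apply, lap_script H hi h w]
  ring

/-- Retraction: firing functions can be made constant above the support. -/
lemma win_retract (H : QBS G m lev t N) {i : ℕ} (hi : i ≤ m) (A : V → ℤ)
    (hA : ∀ w, i < lev w → A w = 0) (hw : G.Winnable A) :
    ∃ f : V → ℤ, (∀ w, i < lev w → f w = f (t i)) ∧ ∀ w, 0 ≤ A w - G.laplacian f w := by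
  obtain ⟨E, hE, f, hf⟩ := hw
  set g : V → ℤ := fun v => if lev v ≤ i then f v else f (t i) with hg
  have hti := H.lev_t i hi
  have key : ∀ w, w ≠ t i → 0 ≤ A w - G.laplacian g w ∧ A w - G.laplacian g w ≤ E w := by
    intro w hw
    rw [hg, lap_const_above H hi]
    by_cases hl : lev w ≤ i
    · rw [if_pos hl, if_neg hw]
      have := hE w
      rw [hf] at this ⊢
      simp at this ⊢
      exact this
    · rw [if_neg hl, hA w (by omega)]
      have := hE w
      simp [this]
  refine ⟨g, fun w hw => ?_, fun w => ?_⟩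
  · simp only [hg, hti, le_refl, if_true, if_neg (show ¬ lev w ≤ i by omega)]
  · by_cases hwt : w = t i
    · have d1 : ∑ w, (A w - G.laplacian g w) = ∑ w, E w := by
        rw [Finset.sum_sub_distrib, deg_lap, hf]
        simp [Finset.sum_sub_distrib, deg_lap]
      rw [← Finset.add_sum_erase _ _ (mem_univ (t i)), ← Finset.add_sum_erase _ E (mem_univ (t i))]
        at d1
      have : ∑ w ∈ univ.erase (t i), (A w - G.laplacian g w) ≤ ∑ w ∈ univ.erase (t i), E w :=
        Finset.sum_le_sum fun w hw => (key w (Finset.ne_of_mem_erase hw)).2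
      have := hE (t i)
      rw [hwt]
      linarith
    · exact (key w hwt).1

/-- Splitting winnability along the cut vertex `t i`. -/
lemma win_split (H : QBS G m lev t N) {i : ℕ} (hi : i < m) (A : V → ℤ)
    (hA : ∀ w, i + 1 < lev w → A w = 0) (hw : G.Winnable A) :
    ∃ h : V → ℤ, (∀ x ∈ Cl lev (i + 1),
        0 ≤ A x + ∑ u ∈ Cl lev (i + 1), h u - (N (i + 1) + 1) * h x) ∧
      G.Winnable (fun w => (if lev w ≤ i then A w else 0)
        + (if w = t i then (N i + 1) * ∑ u ∈ Cl lev (i + 1), h u else 0)) := by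
  obtain ⟨f, hf, hE⟩ := win_retract H hi A hA hw
  have hti := H.lev_t i hi.le
  have hti1 := H.lev_t (i+1) hi
  set h : V → ℤ := fun v => f v - f (t i) with hh
  set F : V → ℤ := fun v => if lev v ≤ i then 0 else if lev v = i + 1 then h v else h (t (i + 1))
    with hF
  set g : V → ℤ := fun v => if lev v ≤ i then f v else f (t i) with hg
  have hfg : f = F + g := by
    funext v
    simp only [hF, hg, hh, Pi.add_apply]
    split_ifs with h1 h2
    · ring
    · ring
    · rw [hf v (by omega)]; ring
  have hlap : ∀ w, G.laplacian f w = G.laplacian F w + G.laplacian g w := by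
    intro w
    rw [hfg, lap_add]; rfl
  have hgz : ∀ w, i < lev w → G.laplacian g w = 0 := by
    intro w hw
    rw [hg, lap_const_above H hi.le, if_neg (by omega)]
  refine ⟨h, fun x hx => ?_, ⟨_, fun w => ?_, g, rfl⟩⟩
  · rw [mem_Cl] at hx
    have := hE x
    rw [hlap, hgz x (by omega), hF, lap_script H hi, if_pos hx,
      if_neg (by rintro rfl; omega)] at this
    linarith
  · have := hE w
    rw [hlap, hF, lap_script H hi] at this
    rw [Pi.sub_apply]
    by_cases hl : lev w ≤ i
    · rw [if_neg (by omega)] at this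
      rw [if_pos hl]
      linarith
    · rw [if_neg hl, hgz w (by omega), if_neg (by rintro rfl; omega)]
      simp


lemma N_pos (H : QBS G m lev t N) : ∀ i, i ≤ m → 1 ≤ N i := by
  intro i
  induction i with
  | zero => intro _; rw [H.N0]
  | succ i ih =>
    intro hi
    rw [H.Nsucc i hi]
    have := ih (by omega)
    have h2 : (0 : ℤ) ≤ ((univ.filter fun v => lev v = i + 1).card : ℤ) := Int.natCast_nonneg _
    linarith

/-- No further positive firing is possible at level `i+1`. -/
def Red (lev : V → ℕ) (N : ℕ → ℤ) (i : ℕ) (r : V → ℤ) : Prop :=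
  ∀ h : V → ℤ, (∀ x ∈ Cl lev (i + 1),
    0 ≤ r x + ∑ u ∈ Cl lev (i + 1), h u - (N (i + 1) + 1) * h x) →
    ∑ u ∈ Cl lev (i + 1), h u ≤ 0

lemma exists_max_script (H : QBS G m lev t N) {i : ℕ} (hi : i < m) (A : V → ℤ) :
    ∃ h : V → ℤ, (∀ x ∈ Cl lev (i + 1),
      0 ≤ A x + ∑ u ∈ Cl lev (i + 1), h u - (N (i + 1) + 1) * h x) ∧
      Red lev N i (fun x => A x + ∑ u ∈ Cl lev (i + 1), h u - (N (i + 1) + 1) * h x) ∧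
      (∀ h' : V → ℤ, (∀ x ∈ Cl lev (i + 1),
        0 ≤ A x + ∑ u ∈ Cl lev (i + 1), h' u - (N (i + 1) + 1) * h' x) →
        ∑ u ∈ Cl lev (i + 1), h' u ≤ ∑ u ∈ Cl lev (i + 1), h u) := by
  have hN := N_pos H i hi.le
  have hNs := H.Nsucc i hi
  set C := Cl lev (i + 1) with hC
  have hNs' : N (i + 1) = N i + (C.card : ℤ) := hNs
  obtain ⟨s, ⟨h, hf, hs⟩, hmax⟩ := Int.exists_greatest_of_bdd
    (P := fun s => ∃ h : V → ℤ, (∀ x ∈ C, 0 ≤ A x + ∑ u ∈ C, h u - (N (i + 1) + 1) * h x) ∧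
      ∑ u ∈ C, h u = s)
    (by
      refine ⟨|∑ x ∈ C, A x|, ?_⟩
      rintro s ⟨h, hf, hs⟩
      have h1 := Finset.sum_nonneg hf
      rw [Finset.sum_sub_distrib, Finset.sum_add_distrib, ← Finset.mul_sum, Finset.sum_const,
        nsmul_eq_mul, hs, hNs'] at h1
      have h2 : (N i + 1) * s ≤ ∑ x ∈ C, A x := by linarith
      have h3 := le_abs_self (∑ x ∈ C, A x)
      by_contra hlt
      push Not at hlt
      have h4 := abs_nonneg (∑ x ∈ C, A x)
      nlinarith)
    (by
      refine ⟨_, fun _ => - ∑ x ∈ C, |A x|, ?_, rfl⟩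
      intro x hx
      have h1 : |A x| ≤ ∑ x ∈ C, |A x| :=
        Finset.single_le_sum (f := fun x => |A x|) (fun y _ => abs_nonneg (A y)) hx
      have h2 := neg_abs_le (A x)
      rw [Finset.sum_const, nsmul_eq_mul, hNs']
      have h4 := abs_nonneg (A x)
      nlinarith)
  refine ⟨h, hf, ?_, fun h' hf' => ?_⟩
  · intro h' hf'
    have := hmax (∑ u ∈ C, (h u + h' u)) ⟨fun u => h u + h' u, fun x hx => by
      have := hf' x hx
      rw [Finset.sum_add_distrib]
      linarith, rfl⟩
    rw [Finset.sum_add_distrib, hs] at this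
    linarith
  · rw [hs]; exact hmax _ ⟨h', hf', rfl⟩

lemma parking {i : ℕ} {r : V → ℤ} (hR : Red lev N i r)
    (h0 : ∀ x ∈ Cl lev (i + 1), 0 ≤ r x) (T : Finset V) (hT : T ⊆ Cl lev (i + 1))
    (hne : T.Nonempty) : ∃ x ∈ T, r x + (T.card : ℤ) ≤ N (i + 1) := by
  by_contra hcon
  push Not at hcon
  have hs : ∑ u ∈ Cl lev (i + 1), (if u ∈ T then (1 : ℤ) else 0) = (T.card : ℤ) := by
    rw [← Finset.sum_filter, Finset.sum_const, nsmul_eq_mul, mul_one,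
      Finset.filter_mem_eq_inter, Finset.inter_eq_right.2 hT]
  have hc : (0 : ℤ) < (T.card : ℤ) := by exact_mod_cast Finset.card_pos.2 hne
  have := hR (fun u => if u ∈ T then 1 else 0) (fun x hx => by
    rw [hs]
    have := h0 x hx
    split_ifs with hx'
    · have := hcon x hx'
      linarith
    · linarith)
  rw [hs] at this
  linarith

lemma park_sum (r : V → ℤ) (n : ℤ) (u : ℤ) (d : ℕ) : ∀ (c : ℕ) (T : Finset V), T.card = c →
    (∀ T' ⊆ T, T'.Nonempty → ∃ x ∈ T', r x + (T'.card : ℤ) ≤ n) →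
    (T.filter fun x => u < r x).card ≤ d →
    ∑ x ∈ T, r x ≤ ∑ s ∈ range c, (n - (s + 1) - if s + 1 ≤ d then 0 else max 0 (n - (s + 1) - u)) := by
  intro c
  induction c with
  | zero => intro T hT _ _; rw [Finset.card_eq_zero] at hT; simp [hT]
  | succ c ih =>
    intro T hT hp hd
    have hne : T.Nonempty := by rw [← Finset.card_pos]; omega
    obtain ⟨x, hx, hxm⟩ := Finset.exists_min_image T r hne
    obtain ⟨y, hy, hyp⟩ := hp T (Finset.Subset.refl _) hne
    have h1 : r x + (c + 1) ≤ n := by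
      have := hxm y hy
      rw [hT] at hyp
      push_cast at hyp
      linarith
    have h2 : ¬ (c + 1 ≤ d) → r x ≤ u := by
      intro hcd
      by_contra hlt
      push Not at hlt
      have : T.filter (fun x => u < r x) = T := by
        rw [Finset.filter_eq_self]
        intro z hz
        exact lt_of_lt_of_le hlt (hxm z hz)
      rw [this] at hd
      omega
    have h3 := ih (T.erase x) (by rw [Finset.card_erase_of_mem hx]; omega)
      (fun T' hT' => hp T' (hT'.trans (Finset.erase_subset _ _)))
      ((Finset.card_le_card (Finset.filter_subset_filter _ (Finset.erase_subset _ _))).trans hd)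
    rw [← Finset.add_sum_erase _ _ hx, Finset.sum_range_succ, add_comm]
    refine add_le_add h3 ?_
    split_ifs with hcd
    · linarith
    · have := h2 hcd
      rcases le_total 0 (n - ((c : ℤ) + 1) - u) with h | h
      · rw [max_eq_right h]; linarith
      · rw [max_eq_left h]; linarith

lemma arith_sum (n : ℤ) (q : ℕ) :
    2 * ∑ s ∈ range q, (n - ((s : ℤ) + 1)) = n * (n - 1) - (n - q) * (n - q - 1) := by
  induction q with
  | zero => simp
  | succ q ih => rw [Finset.sum_range_succ, mul_add, ih]; push_cast; ring

lemma gain_sum (K : ℤ) (d : ℕ) (hd : (d : ℤ) ≤ K) (q : ℕ) (hq : K ≤ q + 1) :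
    (K - d) * (K - d - 1) ≤
      2 * ∑ s ∈ range q, if s + 1 ≤ d then (0 : ℤ) else max 0 (K - (s + 1)) := by
  have nn : ∀ s : ℕ, (0 : ℤ) ≤ if s + 1 ≤ d then (0 : ℤ) else max 0 (K - (s + 1)) := by
    intro s
    split_ifs
    · exact le_refl _
    · exact le_max_left _ _
  have claim : ∀ q' : ℕ, d ≤ q' → (K - d) * (K - d - 1) - (K - q') * (K - q' - 1) ≤
      2 * ∑ s ∈ range q', if s + 1 ≤ d then (0 : ℤ) else max 0 (K - (s + 1)) := by
    intro q' h
    induction q', h using Nat.le_induction with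
    | base =>
      have := Finset.sum_nonneg (s := range d) fun s _ => nn s
      linarith
    | succ q' h ih =>
      rw [Finset.sum_range_succ, mul_add, if_neg (by omega)]
      have := le_max_right 0 (K - ((q' : ℤ) + 1))
      push_cast
      nlinarith
  by_cases hc : (d : ℤ) + 1 ≤ K
  · obtain ⟨k, hk⟩ : ∃ k : ℕ, (k : ℤ) = K - 1 := ⟨(K - 1).toNat, by omega⟩
    have h1 := claim k (by omega)
    have h2 : ∑ s ∈ range k, (if s + 1 ≤ d then (0 : ℤ) else max 0 (K - (s + 1))) ≤
        ∑ s ∈ range q, if s + 1 ≤ d then (0 : ℤ) else max 0 (K - (s + 1)) :=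
      Finset.sum_le_sum_of_subset_of_nonneg (Finset.range_mono (by omega)) fun s _ _ => nn s
    rw [hk] at h1
    have : (K - (K - 1)) * (K - (K - 1) - 1) = 0 := by ring
    linarith
  · have : K = d := by omega
    have h := Finset.sum_nonneg (s := range q) fun s _ => nn s
    rw [this] at h ⊢
    simp only [sub_self, zero_mul]
    linarith

/-- Sum bound for parking functions with a gain. -/
lemma park_sum_gain (H : QBS G m lev t N) {i : ℕ} (hi : i < m) {r : V → ℤ} (hR : Red lev N i r)
    (h0 : ∀ x ∈ Cl lev (i + 1), 0 ≤ r x) (l u : ℤ) (hu : N i - 1 ≤ u) (hul : u ≤ l)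
    (hl : l ≤ N (i + 1))
    (hcard : (((Cl lev (i + 1)).filter fun x => u < r x).card : ℤ) ≤ l - u) :
    2 * ∑ x ∈ Cl lev (i + 1), r x + (N (i + 1) - l) * (N (i + 1) - l - 1)
      ≤ N (i + 1) * (N (i + 1) - 1) - N i * (N i - 1) := by
  have hNs' : N (i + 1) = N i + ((Cl lev (i + 1)).card : ℤ) := H.Nsucc i hi
  obtain ⟨d, hd⟩ : ∃ d : ℕ, (d : ℤ) = l - u := ⟨(l - u).toNat, by omega⟩
  have h1 := park_sum r (N (i + 1)) u d _ (Cl lev (i + 1)) rfl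
    (fun T hT hne => parking hR h0 T hT hne) (by omega)
  rw [Finset.sum_sub_distrib] at h1
  have h2 := arith_sum (N (i + 1)) (Cl lev (i + 1)).card
  have h3 := gain_sum (N (i + 1) - u) d (by omega) (Cl lev (i + 1)).card (by omega)
  have h4 : ∀ s : ℕ, N (i + 1) - ((s : ℤ) + 1) - u = N (i + 1) - u - (s + 1) := fun s => by ring
  simp only [h4] at h1
  have h5 : N (i + 1) - ((Cl lev (i + 1)).card : ℤ) = N i := by linarith
  rw [h5] at h2
  have h6 : N (i + 1) - u - d = N (i + 1) - l := by linarith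
  rw [h6] at h3
  linarith

/-- Sum bound for parking functions. -/
lemma park_sum_basic (H : QBS G m lev t N) {i : ℕ} (hi : i < m) {r : V → ℤ} (hR : Red lev N i r)
    (h0 : ∀ x ∈ Cl lev (i + 1), 0 ≤ r x) :
    2 * ∑ x ∈ Cl lev (i + 1), r x
      ≤ N (i + 1) * (N (i + 1) - 1) - N i * (N i - 1) := by
  have hNs' : N (i + 1) = N i + ((Cl lev (i + 1)).card : ℤ) := H.Nsucc i hi
  have hN := N_pos H i hi.le
  have := park_sum_gain H hi hR h0 (N (i + 1)) (N i - 1) le_rfl (by omega) le_rfl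
    ((Int.ofNat_le.2 (Finset.card_filter_le _ _)).trans (by omega))
  simpa using this

/-- Reduction at level `i+1`. -/
lemma reduce (H : QBS G m lev t N) {i : ℕ} (hi : i < m) (A : V → ℤ)
    (hA : ∀ w, i + 1 < lev w → A w = 0) :
    ∃ A' r h : V → ℤ, G.LinEquiv A (fun w => A' w + r w) ∧ (∀ w, i < lev w → A' w = 0) ∧
      (∀ w, lev w ≠ i + 1 → r w = 0) ∧ (∀ w, 0 ≤ r w) ∧ Red lev N i r ∧
      (∀ w, A' w = (if lev w ≤ i then A w else 0)
        + (if w = t i then (N i + 1) * ∑ u ∈ Cl lev (i + 1), h u else 0)) ∧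
      (∀ x, lev x = i + 1 → r x = A x + ∑ u ∈ Cl lev (i + 1), h u - (N (i + 1) + 1) * h x) ∧
      (∀ h' : V → ℤ, (∀ x ∈ Cl lev (i + 1),
        0 ≤ A x + ∑ u ∈ Cl lev (i + 1), h' u - (N (i + 1) + 1) * h' x) →
        ∑ u ∈ Cl lev (i + 1), h' u ≤ ∑ u ∈ Cl lev (i + 1), h u) := by
  obtain ⟨h, hf, hR, hmax⟩ := exists_max_script H hi A
  have hti := H.lev_t i hi.le
  refine ⟨fun w => (if lev w ≤ i then A w else 0)
        + (if w = t i then (N i + 1) * ∑ u ∈ Cl lev (i + 1), h u else 0),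
    fun w => if lev w = i + 1 then A w + ∑ u ∈ Cl lev (i + 1), h u - (N (i + 1) + 1) * h w else 0,
    h, ?_, ?_, ?_, ?_, ?_, fun w => rfl, ?_, hmax⟩
  · convert script_equiv H hi A h using 1
    funext w
    dsimp only
    by_cases h1 : lev w ≤ i
    · simp only [if_pos h1, if_neg (show lev w ≠ i + 1 by omega)]; ring
    · rw [if_neg h1, if_neg (show w ≠ t i by rintro rfl; omega)]
      by_cases h2 : lev w = i + 1
      · simp only [if_pos h2]; ring
      · simp only [if_neg h2]
        rw [hA w (by omega)]; ring
  · intro w hw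
    dsimp only
    rw [if_neg (by omega), if_neg (by rintro rfl; omega)]; rfl
  · intro w hw
    dsimp only
    rw [if_neg hw]
  · intro w
    dsimp only
    split_ifs with hw
    · exact hf w (mem_Cl.2 hw)
    · exact le_rfl
  · intro h' hf'
    refine hR h' fun x hx => ?_
    have := hf' x hx
    dsimp only at this ⊢
    rw [if_pos (mem_Cl.1 hx)] at this
    exact this
  · intro x hx
    dsimp only
    rw [if_pos hx]

lemma sum_r {i : ℕ} {r : V → ℤ} (hr : ∀ w, lev w ≠ i + 1 → r w = 0) :
    ∑ w, r w = ∑ w ∈ Cl lev (i + 1), r w := by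
  symm
  refine Finset.sum_subset (Finset.subset_univ _) fun x _ hx => hr x ?_
  rwa [mem_Cl] at hx

lemma sum_zero (H : QBS G m lev t N) {A : V → ℤ} (hA : ∀ w, 0 < lev w → A w = 0) :
    ∑ w, A w = A (t 0) := by
  refine Finset.sum_eq_single (t 0) (fun w _ hw => hA w ?_) (by simp)
  by_contra h
  exact hw (H.lev0 w (by omega))

lemma win_zero (H : QBS G m lev t N) {A : V → ℤ} (hA : ∀ w, 0 < lev w → A w = 0)
    (h : 0 ≤ A (t 0)) : G.Winnable A := by
  refine win_eff G fun w => ?_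
  by_cases hw : 0 < lev w
  · rw [hA w hw]
  · rwa [H.lev0 w (by omega)]

/-- Every divisor of large degree is winnable. -/
lemma win_of_deg (H : QBS G m lev t N) : ∀ i, i ≤ m → ∀ A : V → ℤ, (∀ w, i < lev w → A w = 0) →
    N i * (N i - 1) ≤ 2 * ∑ w, A w → G.Winnable A := by
  intro i
  induction i with
  | zero =>
    intro _ A hA hd
    rw [H.N0, sum_zero H hA] at hd
    exact win_zero H hA (by linarith)
  | succ i ih =>
    intro hi A hA hd
    obtain ⟨A', r, h, he, hA', hr, hr0, hR, -⟩ := reduce H hi A hA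
    have h1 := park_sum_basic H hi hR fun x _ => hr0 x
    have h2 := le_deg G he
    rw [Finset.sum_add_distrib, sum_r hr] at h2
    have h3 := ih (by omega) A' hA' (by linarith)
    refine win_congr G (le_symm G he) (win_mono G (fun w => ?_) h3)
    have := hr0 w
    linarith


/-- The divisor of a vertex. -/
def pt (x : V) : V → ℤ := fun w => if w = x then 1 else 0

/-- Indicator of a level. -/
def ind (lev : V → ℕ) (i : ℕ) : V → ℤ := fun w => if lev w = i then 1 else 0

/-- The distinguished divisor at level `i`. -/
def dv (t : ℕ → V) (N : ℕ → ℤ) (i : ℕ) : V → ℤ := fun w => if w = t i then N i + 1 else 0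

lemma sum_pt (x : V) : ∑ w, pt x w = 1 := by simp [pt]

lemma sum_dv (i : ℕ) : ∑ w, dv t N i w = N i + 1 := by simp [dv]

lemma sum_ind (i : ℕ) : ∑ w, ind lev i w = ((Cl lev i).card : ℤ) := by simp [ind, Cl]

lemma pt_nonneg (x w : V) : 0 ≤ pt x w := by unfold pt; split_ifs <;> norm_num

lemma pt_self (x : V) : pt x x = 1 := by simp [pt]

lemma pt_ne {x w : V} (h : w ≠ x) : pt x w = 0 := by simp [pt, h]

lemma eff_sub_pt {E : V → ℤ} (hE : ∀ w, 0 ≤ E w) {x : V} {c : ℤ} (h : c ≤ E x) (w : V) :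
    0 ≤ E w - c * pt x w := by
  by_cases hw : w = x
  · subst hw; rw [pt_self]; linarith
  · rw [pt_ne hw]; have := hE w; linarith

lemma rel (H : QBS G m lev t N) {i : ℕ} (hi : i < m) {x : V} (hx : lev x = i + 1) :
    G.LinEquiv (fun w => (N (i + 1) + 1) * pt x w) (fun w => dv t N i w + ind lev (i + 1) w) := by
  have hs : ∑ u ∈ Cl lev (i + 1), pt x u = 1 := by
    rw [Finset.sum_eq_single x (fun w _ hw => pt_ne hw) (fun h => absurd (mem_Cl.2 hx) h), pt_self]
  convert script_equiv H hi (fun w => (N (i + 1) + 1) * pt x w) (pt x) using 1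
  funext w
  rw [hs]
  unfold dv ind
  by_cases hw : lev w = i + 1
  · simp only [if_pos hw]; split_ifs <;> ring
  · rw [pt_ne (show w ≠ x by rintro rfl; exact hw hx)]
    simp only [if_neg hw]; split_ifs <;> ring

lemma dv_pt (i : ℕ) : dv t N i = fun w => (N i + 1) * pt (t i) w := by
  funext w; unfold dv pt; split_ifs <;> ring

lemma dv_rel (H : QBS G m lev t N) {i : ℕ} (hi : i < m) :
    G.LinEquiv (dv t N (i + 1)) (fun w => dv t N i w + ind lev (i + 1) w) := by
  rw [dv_pt (i + 1)]; exact rel H hi (H.lev_t _ hi)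

lemma dv_x (H : QBS G m lev t N) {i : ℕ} (hi : i < m) {x : V} (hx : lev x = i + 1) :
    G.LinEquiv (dv t N (i + 1)) (fun w => (N (i + 1) + 1) * pt x w) :=
  le_trans' G (dv_rel H hi) (le_symm G (rel H hi hx))

lemma dv_expand (H : QBS G m lev t N) : ∀ i, i ≤ m →
    G.LinEquiv (dv t N i) (fun w => (if lev w ≤ i then 1 else 0) + pt (t 0) w) := by
  intro i
  induction i with
  | zero =>
    intro _
    convert le_refl' G (dv t N 0) using 1
    funext w
    unfold dv pt
    rw [H.N0]
    by_cases hw : w = t 0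
    · subst hw; simp [H.lev_t 0]
    · have : ¬ lev w ≤ 0 := fun h => hw (H.lev0 w (by omega))
      simp [hw, this]
  | succ i ih =>
    intro hi
    refine le_trans' G (dv_rel H hi) ?_
    convert le_add G (ih (by omega)) (le_refl' G (ind lev (i + 1))) using 1
    funext w
    unfold ind
    by_cases h1 : lev w ≤ i
    · simp [h1, show lev w ≤ i + 1 by omega, show lev w ≠ i + 1 by omega]
    · by_cases h2 : lev w = i + 1
      · simp [h2]; ring
      · simp [h1, h2, show ¬ lev w ≤ i + 1 by omega]

/-- The main estimate in the lower bound. -/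
lemma count_bound (H : QBS G m lev t N) {i : ℕ} (hi : i < m) {r h E : V → ℤ} {l : ℤ}
    (hR : Red lev N i r) (h0 : ∀ w, 0 ≤ r w) (hE : ∀ w, 0 ≤ E w)
    (hl1 : N i + 1 ≤ l) (hl2 : l ≤ N (i + 1))
    (hS : 0 ≤ ∑ u ∈ Cl lev (i + 1), h u)
    (hr : ∀ x, lev x = i + 1 → r x = l - E x + ∑ u ∈ Cl lev (i + 1), h u - (N (i + 1) + 1) * h x) :
    2 * ∑ x ∈ Cl lev (i + 1), r x + (N (i + 1) - l) * (N (i + 1) - l - 1)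
      ≤ N (i + 1) * (N (i + 1) - 1) - N i * (N i - 1) := by
  have hN := N_pos H i hi.le
  have hNs' : N (i + 1) = N i + ((Cl lev (i + 1)).card : ℤ) := H.Nsucc i hi
  set C := Cl lev (i + 1) with hC
  set S := ∑ u ∈ C, h u with hSd
  set M := N (i + 1) + 1 with hM
  have hMp : 0 < M := by linarith
  set p := (l + S) / M with hp
  set w := (l + S) % M with hw
  have hLp : M * p + w = l + S := Int.mul_ediv_add_emod _ _
  have hw0 : 0 ≤ w := Int.emod_nonneg _ hMp.ne'
  have hw1 : w < M := Int.emod_lt_of_pos _ hMp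
  have hp0 : 0 ≤ p := Int.ediv_nonneg (by linarith) hMp.le
  have hxp : ∀ x ∈ C, h x ≤ p := by
    intro x hx
    have h1 := hr x (mem_Cl.1 hx)
    have h2 := h0 x
    have h3 := hE x
    rw [hp, Int.le_ediv_iff_mul_le hMp]
    linarith
  have hcnt : ((C.filter fun x => h x < p).card : ℤ) ≤ l - w - (N i + 1) * p := by
    have h1 : S ≤ ∑ x ∈ C, (p - if h x < p then 1 else 0) := by
      refine Finset.sum_le_sum fun x hx => ?_
      have := hxp x hx
      split_ifs <;> omega
    rw [Finset.sum_sub_distrib, Finset.sum_const, nsmul_eq_mul, ← Finset.sum_filter,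
      Finset.sum_const, nsmul_eq_mul, mul_one] at h1
    have h2 : M * p = (N i + 1) * p + (C.card : ℤ) * p := by rw [hM, hNs']; ring
    linarith
  have hcnt0 : (0 : ℤ) ≤ ((C.filter fun x => h x < p).card : ℤ) := Int.natCast_nonneg _
  have hap : 0 ≤ (N i + 1) * p := mul_nonneg (by linarith) hp0
  have hsub : ∀ u, w ≤ u → ((C.filter fun x => u < r x).card : ℤ) ≤
      ((C.filter fun x => h x < p).card : ℤ) := by
    intro u hu
    refine Int.ofNat_le.2 (Finset.card_le_card fun x hx => ?_)
    rw [Finset.mem_filter] at hx ⊢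
    refine ⟨hx.1, lt_of_le_of_ne (hxp x hx.1) fun he => ?_⟩
    have h1 := hr x (mem_Cl.1 hx.1)
    have h3 := hE x
    rw [he] at h1
    linarith [hx.2]
  by_cases hcase : N i - 1 ≤ w
  · exact park_sum_gain H hi hR (fun x _ => h0 x) l w hcase (by linarith) hl2
      ((hsub w le_rfl).trans (by linarith))
  · refine park_sum_gain H hi hR (fun x _ => h0 x) l (N i - 1) le_rfl (by linarith) hl2
      ((hsub _ (by linarith)).trans ?_)
    have hp1 : 1 ≤ p := by
      by_contra hlt
      have : p = 0 := by omega
      rw [this] at hLp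
      linarith
    nlinarith

/-- Lower bound for the rank of multiples of the distinguished divisor. -/
lemma lower (H : QBS G m lev t N) : ∀ i, i ≤ m → ∀ l : ℕ, (l : ℤ) ≤ N i → ∀ E : V → ℤ,
    (∀ w, 0 ≤ E w) → (∀ w, i < lev w → E w = 0) → 2 * ∑ w, E w ≤ l * (l + 3) →
    G.Winnable (fun w => l * dv t N i w - E w) := by
  intro i
  induction i with
  | zero =>
    intro _ l hl E hE hs hd
    have ht0 := H.lev_t 0 (by omega)
    rw [H.N0] at hl
    have hl' : l = 0 ∨ l = 1 := by omega
    rw [sum_zero H hs] at hd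
    refine win_zero H (fun w hw => ?_) ?_
    · rw [hs w hw]
      have : w ≠ t 0 := by rintro rfl; omega
      simp [dv, this]
    · simp only [dv, if_true, H.N0]
      rcases hl' with rfl | rfl
      · push_cast at *; linarith
      · push_cast at *; linarith
  | succ i ih =>
    intro hi l
    have hi' : i < m := hi
    have hti := H.lev_t i (by omega)
    induction l with
    | zero =>
      intro hl E hE hs hd
      have h0 : ∑ w, E w = 0 := le_antisymm (by push_cast at hd; linarith)
        (Finset.sum_nonneg fun w _ => hE w)
      rw [Finset.sum_eq_zero_iff_of_nonneg fun w _ => hE w] at h0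
      exact win_eff G fun w => by rw [h0 w (mem_univ _)]; simp
    | succ l ihl =>
      intro hl E hE hs hd
      by_cases hbig : ∃ x, lev x = i + 1 ∧ ((l : ℤ) + 1) + 1 ≤ E x
      · obtain ⟨x, hx, hxE⟩ := hbig
        have h1 := ihl (by push_cast at hl; linarith) (fun w => E w - ((l : ℤ) + 1 + 1) * pt x w)
          (fun w => eff_sub_pt hE hxE w)
          (fun w hw => by rw [hs w hw, pt_ne (by rintro rfl; omega)]; ring)
          (by
            rw [Finset.sum_sub_distrib, ← Finset.mul_sum, sum_pt]
            push_cast at hd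
            linarith)
        have h2 : G.LinEquiv (fun w => ((l + 1 : ℕ) : ℤ) * dv t N (i + 1) w - E w)
            (fun w => (l : ℤ) * dv t N (i + 1) w - E w + (N (i + 1) + 1) * pt x w) := by
          convert le_add G (le_refl' G (fun w => (l : ℤ) * dv t N (i + 1) w - E w))
            (dv_x H hi' hx) using 1
          funext w; push_cast; ring
        refine win_congr G (le_symm G h2) (win_mono G (fun w => ?_) h1)
        have h3 : 0 ≤ (N (i + 1) - (l + 1)) * pt x w :=
          mul_nonneg (by push_cast at hl; linarith) (pt_nonneg _ _)
        linarith
      · push Not at hbig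
        set L : ℕ := l + 1 with hL
        have hLz : (L : ℤ) = l + 1 := by rw [hL]; push_cast; ring
        have h2 : G.LinEquiv (fun w => (L : ℤ) * dv t N (i + 1) w - E w)
            (fun w => (L : ℤ) * (dv t N i w + ind lev (i + 1) w) - E w) := by
          convert le_add G (le_smul G (L : ℤ) (dv_rel H hi')) (le_refl' G (fun w => - E w)) using 1 <;>
            (funext w; ring)
        refine win_congr G (le_symm G h2) ?_
        by_cases hsmall : (L : ℤ) ≤ N i
        · have h3 := ih (by omega) L hsmall (fun w => if lev w ≤ i then E w else 0)
            (fun w => by split_ifs; exacts [hE w, le_rfl])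
            (fun w hw => by rw [if_neg (by omega)])
            (le_trans (mul_le_mul_of_nonneg_left (Finset.sum_le_sum fun w _ => by
              split_ifs
              exacts [le_rfl, hE w]) (by norm_num)) hd)
          refine win_mono G (fun w => ?_) h3
          unfold ind
          rcases lt_trichotomy (lev w) (i + 1) with h4 | h4 | h4
          · rw [if_pos (by omega), if_neg (by omega)]; linarith
          · rw [if_neg (by omega), if_pos h4]
            have := hbig w h4
            linarith
          · rw [if_neg (by omega), if_neg (by omega), hs w h4]; linarith
        · push Not at hsmall
          set A : V → ℤ := fun w => (L : ℤ) * (dv t N i w + ind lev (i + 1) w) - E w with hA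
          have dvz : ∀ w, i < lev w → dv t N i w = 0 := by
            intro w hw
            unfold dv
            rw [if_neg]
            rintro rfl; omega
          obtain ⟨A', r, h, he, hA', hr, hr0, hR, -, hrx, hmax⟩ := reduce H hi' A (fun w hw => by
            simp only [hA]
            rw [dvz w (by omega), hs w hw]
            unfold ind
            rw [if_neg (by omega)]; ring)
          have hAx : ∀ x, lev x = i + 1 → A x = L - E x := by
            intro x hx
            simp only [hA]
            rw [dvz x (by omega)]
            unfold ind
            rw [if_pos hx]; ring
          have hS := hmax (fun _ => 0) (fun x hx => by
            have := hbig x (mem_Cl.1 hx)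
            rw [hAx x (mem_Cl.1 hx)]
            simp only [Finset.sum_const_zero]
            linarith)
          simp only [Finset.sum_const_zero] at hS
          have key := count_bound H hi' hR hr0 hE (l := (L : ℤ)) (by omega) hl hS
            (fun x hx => by rw [hrx x hx, hAx x hx])
          have hdeg := le_deg G he
          have hNs' : N (i + 1) = N i + ((Cl lev (i + 1)).card : ℤ) := H.Nsucc i hi'
          have hdA : ∑ w, A w = (L : ℤ) * (N (i + 1) + 1) - ∑ w, E w := by
            simp only [hA]
            rw [Finset.sum_sub_distrib, ← Finset.mul_sum, Finset.sum_add_distrib, sum_dv, sum_ind,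
              hNs']
            ring
          rw [hdA, Finset.sum_add_distrib, sum_r hr] at hdeg
          have h5 := win_of_deg H i (by omega) A' hA' (by nlinarith)
          refine win_congr G (le_symm G he) (win_mono G (fun w => ?_) h5)
          have := hr0 w
          linarith


lemma sum_le_lev (H : QBS G m lev t N) : ∀ i, i ≤ m →
    ∑ u, (if lev u ≤ i then (1 : ℤ) else 0) = N i := by
  intro i
  induction i with
  | zero =>
    intro _
    have ht0 := H.lev_t 0 (by omega)
    rw [H.N0, Finset.sum_eq_single (t 0) (fun w _ hw => ?_) (by simp), if_pos (by omega)]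
    rw [if_neg fun h => hw (H.lev0 w (by omega))]
  | succ i ih =>
    intro hi
    have hNs' : N (i + 1) = N i + ((Cl lev (i + 1)).card : ℤ) := H.Nsucc i hi
    rw [hNs', ← ih (by omega), ← sum_ind, ← Finset.sum_add_distrib]
    refine Finset.sum_congr rfl fun u _ => ?_
    unfold ind
    split_ifs <;> omega

lemma card_V (H : QBS G m lev t N) : (Fintype.card V : ℤ) = N m := by
  rw [← sum_le_lev H m le_rfl]
  have : ∀ u ∈ (univ : Finset V), (if lev u ≤ m then (1 : ℤ) else 0) = 1 := fun u _ =>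
    if_pos (H.lev_le u)
  rw [Finset.sum_congr rfl this]
  simp

lemma order_sum (H : QBS G m lev t N) (o : V → ℕ)
    (hlev : ∀ u w, lev u < lev w → o u < o w) (w : V) (hw : w ≠ t 0) :
    ∑ u ∈ univ.filter (fun u => o u < o w), (G.mult w u : ℤ)
      = ((univ.filter fun u => o u < o w).card : ℤ) + 1 := by
  obtain ⟨i, hi⟩ : ∃ i, lev w = i + 1 :=
    Nat.exists_eq_succ_of_ne_zero fun h => hw (H.lev0 w h)
  have him : i < m := by have := H.lev_le w; omega
  have h1 : ∑ u, ((if o u < o w then (G.mult w u : ℤ) else 0) - if o u < o w then 1 else 0)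
      = ∑ u, (dv t N i u - if lev u ≤ i then 1 else 0) := by
    refine Finset.sum_congr rfl fun u _ => ?_
    have hti := H.lev_t i him.le
    unfold dv
    rcases lt_trichotomy (lev u) (i + 1) with h | h | h
    · have ho := hlev u w (by omega)
      rw [if_pos ho, if_pos ho, if_pos (show lev u ≤ i by omega), G.symm]
      congr 1
      by_cases hu : lev u = i
      · rw [H.mult_up u w (by omega), hu]
      · rw [H.mult_far u w (by omega), if_neg (by rintro rfl; omega)]; rfl
    · rw [if_neg (show u ≠ t i by rintro rfl; omega), if_neg (show ¬ lev u ≤ i by omega)]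
      split_ifs with ho
      · rw [H.mult_same w u (by rintro rfl; omega) (by omega)]; rfl
      · rfl
    · have ho := hlev w u (by omega)
      rw [if_neg (show u ≠ t i by rintro rfl; omega), if_neg (show ¬ lev u ≤ i by omega),
        if_neg (by omega), if_neg (by omega)]
  rw [Finset.sum_sub_distrib, Finset.sum_sub_distrib, sum_dv, sum_le_lev H i him.le,
    ← Finset.sum_filter, ← Finset.sum_filter, Finset.sum_const, nsmul_eq_mul, mul_one] at h1
  linarith

lemma exists_order (H : QBS G m lev t N) : ∃ p : V → ℕ, p (t 0) = 0 ∧ (∀ w, w ≠ t 0 → 1 ≤ p w) ∧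
    (∀ f : ℕ → ℤ, ∑ w, f (p w) = ∑ j ∈ range (Fintype.card V), f j) ∧
    (∀ A : V → ℤ, A (t 0) ≤ -1 → (∀ w, w ≠ t 0 → A w ≤ p w) → ¬ G.Winnable A) := by
  have : Nonempty V := ⟨t 0⟩
  set e := Fintype.equivFin V with he
  set o : V → ℕ := fun v => lev v * Fintype.card V + (e v : ℕ) with ho
  have hlev : ∀ u w, lev u < lev w → o u < o w := by
    intro u w h
    have h1 := (e u).2
    have h2 : (lev u + 1) * Fintype.card V ≤ lev w * Fintype.card V := Nat.mul_le_mul_right _ h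
    simp only [ho]
    linarith [Nat.zero_le (e w : ℕ)]
  have hinj : ∀ u w, o u = o w → u = w := by
    intro u w h
    rcases lt_trichotomy (lev u) (lev w) with h1 | h1 | h1
    · have := hlev u w h1; omega
    · simp only [ho, h1] at h
      exact e.injective (Fin.ext (by omega))
    · have := hlev w u h1; omega
  have ht0 := H.lev_t 0 (by omega)
  set p : V → ℕ := fun w => (univ.filter fun u => o u < o w).card with hp
  have hmono : ∀ u w, o u < o w → p u < p w := by
    intro u w h
    refine Finset.card_lt_card ?_
    rw [Finset.ssubset_iff_of_subset]
    · exact ⟨u, by simp [h], by simp⟩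
    · intro x hx
      simp only [Finset.mem_filter, Finset.mem_univ, true_and] at hx ⊢
      omega
  have hpos : ∀ w, w ≠ t 0 → o (t 0) < o w := by
    intro w hw
    refine hlev _ _ ?_
    rw [ht0]
    exact Nat.pos_of_ne_zero fun h => hw (H.lev0 w h)
  have hpt0 : p (t 0) = 0 := by
    simp only [hp]
    rw [Finset.card_eq_zero, Finset.filter_eq_empty_iff]
    intro u _ hu
    by_cases h : u = t 0
    · rw [h] at hu; omega
    · have := hpos u h; omega
  have hpinj : Function.Injective p := by
    intro u w h
    rcases lt_trichotomy (o u) (o w) with h1 | h1 | h1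
    · have := hmono u w h1; omega
    · exact hinj u w h1
    · have := hmono w u h1; omega
  refine ⟨p, hpt0, fun w hw => ?_, fun f => ?_, fun A hA0 hA => ?_⟩
  · have := hmono _ _ (hpos w hw); omega
  · have himg : univ.image p = range (Fintype.card V) := by
      refine Finset.eq_of_subset_of_card_le ?_ ?_
      · intro j hj
        obtain ⟨w, -, rfl⟩ := Finset.mem_image.1 hj
        rw [Finset.mem_range, ← Finset.card_univ]
        refine Finset.card_lt_card ?_
        rw [Finset.ssubset_iff_of_subset (Finset.subset_univ _)]
        exact ⟨w, by simp, by simp⟩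
      · rw [Finset.card_image_of_injective _ hpinj, Finset.card_univ, Finset.card_range]
    rw [← himg, Finset.sum_image fun a _ b _ h => hpinj h]
  · refine not_win_of_order G o A fun w => ?_
    by_cases hw : w = t 0
    · have : (0 : ℤ) ≤ ∑ u ∈ univ.filter (fun u => o u < o w), (G.mult w u : ℤ) :=
        Finset.sum_nonneg fun u _ => Int.natCast_nonneg _
      rw [hw] at this ⊢
      linarith
    · rw [order_sum H o hlev w hw]
      have := hA w hw
      simp only [hp] at this
      linarith

lemma tri_sum (l : ℕ) : ∀ n : ℕ, l ≤ n →
    2 * ∑ j ∈ range n, max 0 ((l : ℤ) - j) = l * (l + 1) := by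
  intro n h
  induction n, h using Nat.le_induction with
  | base =>
    have : ∀ k : ℕ, k ≤ l → 2 * ∑ j ∈ range k, max 0 ((l : ℤ) - j) = 2 * l * k - k * (k - 1) := by
      intro k
      induction k with
      | zero => intro _; simp
      | succ k ih =>
        intro hk
        rw [Finset.sum_range_succ, mul_add, ih (by omega), max_eq_right (by omega)]
        push_cast
        ring
    rw [this l le_rfl]; ring
  | succ n h ih =>
    rw [Finset.sum_range_succ, mul_add, ih, max_eq_left (by omega)]; ring

/-- Upper bound for the rank. -/
lemma upper (H : QBS G m lev t N) (l : ℕ) (hl : (l : ℤ) ≤ N m) :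
    ∃ E : V → ℤ, (∀ w, 0 ≤ E w) ∧ 2 * ∑ w, E w = l * (l + 3) + 2 ∧
      ¬ G.Winnable (fun w => l * dv t N m w - E w) := by
  obtain ⟨p, hp0, -, hsum, hun⟩ := exists_order H
  refine ⟨fun w => max 0 ((l : ℤ) - p w) + (l + 1) * pt (t 0) w, fun w => ?_, ?_, fun hw => ?_⟩
  · have := pt_nonneg (t 0) w
    have h2 := le_max_left 0 ((l : ℤ) - p w)
    positivity
  · rw [Finset.sum_add_distrib, ← Finset.mul_sum, sum_pt, hsum (fun j => max 0 ((l : ℤ) - j)),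
      mul_add, tri_sum l _ (by have := card_V H; omega)]
    ring
  · have h1 := le_add G (le_smul G (l : ℤ) (dv_expand H m le_rfl))
      (le_refl' G (fun w => - (max 0 ((l : ℤ) - p w) + (l + 1) * pt (t 0) w)))
    refine hun _ ?_ ?_ (win_congr G h1 (by simpa only [sub_eq_add_neg] using hw))
    · rw [pt_self, hp0, if_pos (H.lev_le _), max_eq_right (by simp)]
      push_cast
      linarith
    · intro w hw
      rw [pt_ne hw, if_pos (H.lev_le _)]
      have := le_max_right 0 ((l : ℤ) - p w)
      linarith

lemma split_r (H : QBS G m lev t N) {i : ℕ} (hi : i < m) {B r d : V → ℤ}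
    (hB : ∀ w, i < lev w → B w = 0) (hr : ∀ w, lev w ≠ i + 1 → r w = 0) (hr0 : ∀ w, 0 ≤ r w)
    (hR : Red lev N i r) (hd : ∀ w, lev w ≠ i + 1 → d w = 0) (hd0 : ∀ w, 0 ≤ d w)
    (hw : G.Winnable (fun w => B w + r w - d w)) :
    ∃ h : V → ℤ, ∑ u ∈ Cl lev (i + 1), h u ≤ 0 ∧ (∀ x ∈ Cl lev (i + 1), h x ≤ 0) ∧
      (∀ x ∈ Cl lev (i + 1),
        0 ≤ r x - d x + ∑ u ∈ Cl lev (i + 1), h u - (N (i + 1) + 1) * h x) ∧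
      G.Winnable (fun w => B w + (∑ u ∈ Cl lev (i + 1), h u) * dv t N i w) := by
  obtain ⟨h, h1, h2⟩ := win_split H hi _ (fun w hw => by
    rw [hB w (by omega), hr w (by omega), hd w (by omega)]; rfl) hw
  have h3 : ∀ x ∈ Cl lev (i + 1),
        0 ≤ r x - d x + ∑ u ∈ Cl lev (i + 1), h u - (N (i + 1) + 1) * h x := by
    intro x hx
    have := h1 x hx
    rw [hB x (by rw [mem_Cl] at hx; omega)] at this
    linarith
  have hS := hR h (fun x hx => by have := h3 x hx; have := hd0 x; linarith)
  refine ⟨h, hS, fun x hx => ?_, h3, ?_⟩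
  · obtain ⟨y, hy, hy2⟩ := parking hR (fun x _ => hr0 x) {x} (by simpa using mem_Cl.1 hx)
      (by simp)
    rw [Finset.mem_singleton] at hy
    subst hy
    have h4 := h3 y hx
    have h5 := hd0 y
    have h6 := hr0 y
    simp only [Finset.card_singleton] at hy2
    by_contra hlt
    push Not at hlt
    push_cast at hy2
    nlinarith
  · refine win_mono G (fun w => le_of_eq ?_) h2
    unfold dv
    by_cases hwl : lev w ≤ i
    · rw [if_pos hwl, hr w (by omega), hd w (by omega)]
      split_ifs <;> ring
    · rw [if_neg hwl, hB w (by omega)]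
      split_ifs <;> ring


lemma sum_le_mem {C : Finset V} {h : V → ℤ} (hh : ∀ x ∈ C, h x ≤ 0) {x : V} (hx : x ∈ C) :
    ∑ u ∈ C, h u ≤ h x := by
  rw [← Finset.add_sum_erase _ _ hx]
  have := Finset.sum_nonpos fun y (hy : y ∈ C.erase x) => hh y (Finset.mem_of_mem_erase hy)
  linarith

lemma neg_of_lt {C : Finset V} {h r d : V → ℤ} {M : ℤ} (hM : 0 < M) (hS : ∑ u ∈ C, h u ≤ 0)
    {x : V} (hx : x ∈ C) (hf : ∀ x ∈ C, 0 ≤ r x - d x + ∑ u ∈ C, h u - M * h x)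
    (hrd : r x - d x + ∑ u ∈ C, h u < 0) : h x ≤ -1 := by
  have := hf x hx
  by_contra hlt
  have : 0 ≤ h x := by omega
  nlinarith

lemma r_lower {C : Finset V} {h r : V → ℤ} (hr : ∀ w, 0 ≤ r w) (_hS : ∑ u ∈ C, h u ≤ 0)
    (hh : ∀ x ∈ C, h x ≤ 0) (h0 : ∀ x ∈ C, h x = 0 → - ∑ u ∈ C, h u ≤ r x) :
    (- ∑ u ∈ C, h u) * ((C.card : ℤ) + ∑ u ∈ C, h u) ≤ ∑ x ∈ C, r x := by
  set S := ∑ u ∈ C, h u with hSd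
  have h1 : ∑ x ∈ C, (-S) * (1 + h x) ≤ ∑ x ∈ C, r x := by
    refine Finset.sum_le_sum fun x hx => ?_
    by_cases hz : h x = 0
    · rw [hz]; have := h0 x hx hz; linarith
    · have h2 := hh x hx
      have h3 : h x ≤ -1 := by omega
      have h4 := hr x
      nlinarith
  rw [← Finset.mul_sum, Finset.sum_add_distrib, Finset.sum_const, nsmul_eq_mul, mul_one] at h1
  exact h1

lemma split_base (H : QBS G m lev t N) {i : ℕ} (hi : i < m) {B r : V → ℤ}
    (hB : ∀ w, i < lev w → B w = 0) (hr : ∀ w, lev w ≠ i + 1 → r w = 0) (hr0 : ∀ w, 0 ≤ r w)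
    (hR : Red lev N i r) (hw : G.Winnable (fun w => B w + r w)) : G.Winnable B := by
  have hN := N_pos H i hi.le
  obtain ⟨h, hS, -, -, h4⟩ := split_r H hi hB hr hr0 hR (d := fun _ => 0) (fun _ _ => rfl)
    (fun _ => le_rfl) (by simpa using hw)
  refine win_mono G (fun w => ?_) h4
  have : 0 ≤ dv t N i w := by unfold dv; split_ifs <;> linarith
  nlinarith

lemma card_pos' (H : QBS G m lev t N) {i : ℕ} (hi : i < m) :
    (1 : ℤ) ≤ ((Cl lev (i + 1)).card : ℤ) := by
  have : 0 < (Cl lev (i + 1)).card := Finset.card_pos.2 ⟨t (i + 1), mem_Cl.2 (H.lev_t _ hi)⟩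
  omega

lemma win_sub {A B E : V → ℤ} (h : G.LinEquiv A B) (hw : G.Winnable (fun w => A w - E w)) :
    G.Winnable (fun w => B w - E w) := by
  have h1 := le_add G h (le_refl' G (fun w => - E w))
  have := win_congr G h1 (by simpa only [sub_eq_add_neg] using hw)
  simpa only [sub_eq_add_neg] using this

/-- Lower bound on the gonality. -/
lemma gon_lower (H : QBS G m lev t N) : ∀ i, i ≤ m → ∀ A : V → ℤ, (∀ w, i < lev w → A w = 0) →
    (∀ x, lev x ≤ i → G.Winnable (fun w => A w - pt x w)) → N i ≤ ∑ w, A w := by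
  intro i
  induction i with
  | zero =>
    intro _ A hA hw
    have h1 := win_deg G (hw (t 0) (by rw [H.lev_t 0 (by omega)]))
    rw [Finset.sum_sub_distrib, sum_pt] at h1
    rw [H.N0]; linarith
  | succ i ih =>
    intro hi A hA hw
    have hi' : i < m := hi
    have hN := N_pos H i hi'.le
    have hNs' : N (i + 1) = N i + ((Cl lev (i + 1)).card : ℤ) := H.Nsucc i hi
    obtain ⟨A', r, -, he, hA', hr, hr0, hR, -⟩ := reduce H hi' A hA
    have hdeg := le_deg G he
    rw [Finset.sum_add_distrib, sum_r hr] at hdeg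
    have hw' : ∀ x, lev x ≤ i + 1 → G.Winnable (fun w => A' w + r w - pt x w) :=
      fun x hx => win_sub he (hw x hx)
    by_cases hall : ∀ x ∈ Cl lev (i + 1), 1 ≤ r x
    · have h1 := ih (by omega) A' hA' (fun x hx => by
        refine split_base H hi' (fun w hwl => ?_) hr hr0 hR
          (win_mono G (fun w => ?_) (hw' x (by omega)))
        · rw [hA' w hwl, pt_ne (by rintro rfl; omega)]; rfl
        · linarith)
      have h2 := Finset.sum_le_sum hall
      rw [Finset.sum_const, nsmul_eq_mul, mul_one] at h2
      linarith
    · push Not at hall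
      obtain ⟨x, hx, hrx⟩ := hall
      have hlx := mem_Cl.1 hx
      obtain ⟨h, hS, hh, hf, hwin⟩ := split_r H hi' hA' hr hr0 hR (d := pt x)
        (fun w hw => pt_ne (by rintro rfl; exact hw hlx)) (pt_nonneg x) (hw' x hlx.le)
      have h1 : h x ≤ -1 := neg_of_lt (by linarith) hS hx hf (by rw [pt_self]; linarith)
      have h2 := sum_le_mem hh hx
      have h3 := r_lower hr0 hS hh (fun y hy hy0 => by
        have h4 := hf y hy
        have h5 := pt_nonneg x y
        rw [hy0] at h4
        linarith)
      have h4 := win_deg G hwin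
      rw [Finset.sum_add_distrib, ← Finset.mul_sum, sum_dv] at h4
      set S := ∑ u ∈ Cl lev (i + 1), h u
      have hrs : 0 ≤ ∑ w ∈ Cl lev (i + 1), r w := Finset.sum_nonneg fun w _ => hr0 w
      have hq := card_pos' H hi'
      set q : ℤ := ((Cl lev (i + 1)).card : ℤ)
      rw [hdeg, hNs']
      by_cases hsq : -S ≤ q
      · have : 0 ≤ (-S - 1) * (N i + q + S) := mul_nonneg (by linarith) (by linarith)
        nlinarith
      · push Not at hsq
        have : 0 ≤ (-S - q - 1) * (N i + 1) := mul_nonneg (by omega) (by linarith)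
        nlinarith

/-- Uniqueness of the divisor realising the second gonality. -/
lemma unique_top (H : QBS G m lev t N) {i : ℕ} (hm : m = i + 1) (A : V → ℤ)
    (hw : ∀ x y, G.Winnable (fun w => A w - (pt x w + pt y w)))
    (hd : ∑ w, A w = N m + 1) : G.LinEquiv A (dv t N m) ∨ (i = 0 ∧ N m = 2) := by
  have hi : i < m := by omega
  have hN := N_pos H i hi.le
  have hNs' : N (i + 1) = N i + ((Cl lev (i + 1)).card : ℤ) := H.Nsucc i hi
  obtain ⟨A', r, -, he, hA', hr, hr0, hR, -⟩ := reduce H hi A (fun w hwl => by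
    have := H.lev_le w; omega)
  have hdeg := le_deg G he
  rw [Finset.sum_add_distrib, sum_r hr] at hdeg
  have hw' : ∀ x y, G.Winnable (fun w => A' w + r w - (pt x w + pt y w)) :=
    fun x y => win_sub he (hw x y)
  have ht0 := H.lev_t 0 (by omega)
  have hti := H.lev_t i hi.le
  have hq := card_pos' H hi
  have hpz : ∀ y, lev y ≤ i → ∀ w, i < lev w → pt y w = 0 := fun y hy w hw =>
    pt_ne (by rintro rfl; omega)
  have hpz' : ∀ y, lev y = i + 1 → ∀ w, lev w ≠ i + 1 → pt y w = 0 := fun y hy w hw =>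
    pt_ne (by rintro rfl; omega)
  have hrs : 0 ≤ ∑ w ∈ Cl lev (i + 1), r w := Finset.sum_nonneg fun w _ => hr0 w
  rw [hm, hNs'] at hd
  by_cases hall : ∀ x ∈ Cl lev (i + 1), 1 ≤ r x
  · left
    have h1 := gon_lower H i hi.le (fun w => A' w - pt (t 0) w)
      (fun w hwl => by rw [hA' w hwl, hpz (t 0) (by omega) w hwl]; rfl) (fun x hx => by
        refine split_base H hi (fun w hwl => ?_) hr hr0 hR
          (win_mono G (fun w => ?_) (hw' (t 0) x))
        · rw [hA' w hwl, hpz (t 0) (by omega) w hwl, hpz x hx w hwl]; rfl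
        · linarith)
    rw [Finset.sum_sub_distrib, sum_pt] at h1
    have h2 := Finset.sum_le_sum hall
    rw [Finset.sum_const, nsmul_eq_mul, mul_one] at h2
    have h3 : ∑ x ∈ Cl lev (i + 1), (r x - 1) = 0 := by
      rw [Finset.sum_sub_distrib, Finset.sum_const, nsmul_eq_mul, mul_one]; linarith
    rw [Finset.sum_eq_zero_iff_of_nonneg fun x hx => by have := hall x hx; linarith] at h3
    have hx : t (i + 1) ∈ Cl lev (i + 1) := mem_Cl.2 (H.lev_t _ hi)
    set x := t (i + 1) with hxd
    obtain ⟨h, hS, hh, hf, hwin⟩ := split_r H hi hA' hr hr0 hR (d := fun w => pt x w + pt x w)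
        (fun w hw => by rw [hpz' x (mem_Cl.1 hx) w hw]; rfl)
        (fun w => add_nonneg (pt_nonneg x w) (pt_nonneg x w)) (hw' x x)
    have h4 : h x ≤ -1 := neg_of_lt (by linarith) hS hx hf (by
      rw [pt_self]; have := h3 x hx; linarith)
    have h5 := sum_le_mem hh hx
    have h6 := win_deg G hwin
    rw [Finset.sum_add_distrib, ← Finset.mul_sum, sum_dv] at h6
    have hS1 : ∑ u ∈ Cl lev (i + 1), h u = -1 := by nlinarith
    rw [hS1] at hwin h6
    have h7 := win_deg_zero G hwin (by
      rw [Finset.sum_add_distrib, ← Finset.mul_sum, sum_dv]; linarith)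
    have h8 := le_add G h7 (le_refl' G (dv t N i))
    have h9 : G.LinEquiv A' (dv t N i) := by
      convert h8 using 1 <;> (funext w; ring)
    refine le_trans' G he ?_
    rw [hm]
    refine le_trans' G (le_add G h9 (le_refl' G r)) (le_symm G ?_)
    convert dv_rel H hi using 1
    funext w
    unfold ind
    split_ifs with hwl
    · have := h3 w (mem_Cl.2 hwl)
      linarith
    · rw [hr w hwl]
  · right
    push Not at hall
    obtain ⟨x, hx, hrx⟩ := hall
    have hlx := mem_Cl.1 hx
    obtain ⟨h, hS, hh, hf, hwin⟩ := split_r H hi (B := fun w => A' w - pt (t i) w)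
      (fun w hwl => by rw [hA' w hwl, hpz (t i) (by omega) w hwl]; rfl) hr hr0 hR (d := pt x)
      (hpz' x hlx) (pt_nonneg x) (win_mono G (fun w => by linarith) (hw' x (t i)))
    have h1 : h x ≤ -1 := neg_of_lt (by linarith) hS hx hf (by rw [pt_self]; linarith)
    have h2 := sum_le_mem hh hx
    have h3 := r_lower hr0 hS hh (fun y hy hy0 => by
      have h4 := hf y hy
      have h5 := pt_nonneg x y
      rw [hy0] at h4
      linarith)
    have h4 := win_deg G hwin
    rw [Finset.sum_add_distrib, ← Finset.mul_sum, sum_dv, Finset.sum_sub_distrib, sum_pt] at h4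
    have hS1 : ∑ u ∈ Cl lev (i + 1), h u = -1 := by
      set S := ∑ u ∈ Cl lev (i + 1), h u
      set q : ℤ := ((Cl lev (i + 1)).card : ℤ)
      by_contra hne
      have hS2 : S ≤ -2 := by omega
      by_cases hsq : -S ≤ q
      · have : 0 < (-S - 1) * (N i + q + S) := mul_pos (by linarith) (by linarith)
        nlinarith
      · push Not at hsq
        have : 0 ≤ (-S - q - 1) * (N i + 1) := mul_nonneg (by omega) (by linarith)
        nlinarith
    rw [hS1] at h3 h4 hwin hf h2
    have hdA' : ∑ w, A' w = N i + 2 := by linarith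
    have hdr : ∑ w ∈ Cl lev (i + 1), r w = ((Cl lev (i + 1)).card : ℤ) - 1 := by linarith
    have h7 := win_deg_zero G hwin (by
      rw [Finset.sum_add_distrib, ← Finset.mul_sum, sum_dv, Finset.sum_sub_distrib, sum_pt]
      linarith)
    by_cases hq1 : ∃ z ∈ Cl lev (i + 1), z ≠ x
    · exfalso
      obtain ⟨z, hz, hzx⟩ := hq1
      -- `r` equals one off `x`
      have hy : ∀ y ∈ (Cl lev (i + 1)).erase x, 1 ≤ r y := by
        intro y hy
        rw [Finset.mem_erase] at hy
        have h8 := hf y hy.2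
        rw [pt_ne hy.1] at h8
        have h9 := hh y hy.2
        have h10 : h x + h y ≤ -1 + 0 := by linarith
        have h11 : h y = 0 := by
          have h12 : -1 = h x + ∑ u ∈ (Cl lev (i + 1)).erase x, h u := by
            rw [Finset.add_sum_erase _ _ hx, hS1]
          have h13 := sum_le_mem (C := (Cl lev (i + 1)).erase x) (h := h)
            (fun u hu => hh u (Finset.mem_of_mem_erase hu)) (Finset.mem_erase.2 hy)
          linarith
        rw [h11] at h8
        linarith
      have h8 : ∑ y ∈ (Cl lev (i + 1)).erase x, (r y - 1) = 0 := by
        have h9 := Finset.add_sum_erase (Cl lev (i + 1)) r hx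
        have h10 := Finset.card_erase_of_mem hx
        have h11 := hr0 x
        rw [Finset.sum_sub_distrib, Finset.sum_const, nsmul_eq_mul, mul_one, h10]
        rw [Nat.cast_sub (by omega)]
        push_cast
        linarith [show r x = 0 by omega]
      rw [Finset.sum_eq_zero_iff_of_nonneg fun y hy' => by have := hy y hy'; linarith] at h8
      have hrz := h8 z (Finset.mem_erase.2 ⟨hzx, hz⟩)
      obtain ⟨g, hgS, hg, hgf, hgwin⟩ := split_r H hi hA' hr hr0 hR
        (d := fun w => pt x w + pt z w)
        (fun w hw => by rw [hpz' x hlx w hw, hpz' z (mem_Cl.1 hz) w hw]; rfl)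
        (fun w => add_nonneg (pt_nonneg x w) (pt_nonneg z w)) (hw' x z)
      have k1 : g x ≤ -1 := neg_of_lt (by linarith) hgS hx hgf (by
        rw [pt_self, pt_ne hzx.symm]; linarith)
      have k2 := sum_le_mem hg hx
      have k3 : g z ≤ -1 := neg_of_lt (by linarith) hgS hz hgf (by
        rw [pt_self, pt_ne hzx]; linarith)
      have k4 : ∑ u ∈ Cl lev (i + 1), g u ≤ -2 := by
        rw [← Finset.add_sum_erase _ _ hx]
        have := sum_le_mem (C := (Cl lev (i + 1)).erase x) (h := g)
            (fun u hu => hg u (Finset.mem_of_mem_erase hu)) (Finset.mem_erase.2 ⟨hzx, hz⟩)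
        linarith
      have k5 := win_deg G hgwin
      rw [Finset.sum_add_distrib, ← Finset.mul_sum, sum_dv] at k5
      nlinarith
    · push Not at hq1
      have hC1 : Cl lev (i + 1) = {x} := Finset.eq_singleton_iff_unique_mem.2 ⟨hx, hq1⟩
      have hc1 : (Cl lev (i + 1)).card = 1 := by rw [hC1]; simp
      by_cases hi0 : i = 0
      · refine ⟨hi0, ?_⟩
        rw [hm, hNs', hc1, hi0, H.N0]; norm_num
      · exfalso
        obtain ⟨g, hgS, hg, hgf, hgwin⟩ := split_r H hi (B := fun w => A' w - pt (t 0) w)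
          (fun w hwl => by rw [hA' w hwl, hpz (t 0) (by omega) w hwl]; rfl) hr hr0 hR (d := pt x)
          (hpz' x hlx) (pt_nonneg x) (win_mono G (fun w => by linarith) (hw' x (t 0)))
        have k1 : g x ≤ -1 := neg_of_lt (by linarith) hgS hx hgf (by rw [pt_self]; linarith)
        have k2 := sum_le_mem hg hx
        have k5 := win_deg G hgwin
        rw [Finset.sum_add_distrib, ← Finset.mul_sum, sum_dv, Finset.sum_sub_distrib, sum_pt] at k5
        have k6 : ∑ u ∈ Cl lev (i + 1), g u = -1 := by nlinarith
        rw [k6] at hgwin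
        obtain ⟨p, hp0, hp1, -, hun⟩ := exists_order H
        have hne : t i ≠ t 0 := fun h => hi0 (by rw [h] at hti; omega)
        have k7 := le_add G h7 (le_refl' G (fun w => pt (t i) w - pt (t 0) w))
        refine hun (fun w => 0 + (pt (t i) w - pt (t 0) w)) ?_ ?_ (win_congr G k7 ?_)
        · rw [pt_self, pt_ne hne.symm]; norm_num
        · intro w hw0
          rw [pt_ne hw0]
          by_cases hwi : w = t i
          · have := hp1 w hw0
            rw [hwi, pt_self]
            rw [hwi] at this
            push_cast
            omega
          · rw [pt_ne hwi]; push_cast; omega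
        · refine win_mono G (fun w => ?_) hgwin
          linarith


lemma val_formula (H : QBS G m lev t N) (w : V) :
    (G.valence w : ℤ) = (if lev w = 0 then 0 else N (lev w))
      + (if w = t (lev w) then (N (lev w) + 1) * ((Cl lev (lev w + 1)).card : ℤ) else 0) := by
  have h1 := lap_formula H (pt w) w
  have h2 : G.laplacian (pt w) w = (G.valence w : ℤ) := by
    unfold laplacian valence
    push_cast
    refine Finset.sum_congr rfl fun u _ => ?_
    by_cases hu : u = w
    · subst hu; rw [G.loopless]; simp
    · rw [pt_self, pt_ne hu]; ring
  have h3 : ∑ u ∈ Cl lev (lev w), (pt w w - pt w u) = ((Cl lev (lev w)).card : ℤ) - 1 := by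
    rw [Finset.sum_sub_distrib, Finset.sum_const, nsmul_eq_mul, pt_self, mul_one,
      Finset.sum_eq_single w (fun u _ hu => pt_ne hu) (fun h => absurd (mem_Cl.2 rfl) h), pt_self]
  have h4 : ∑ u ∈ Cl lev (lev w + 1), (pt w w - pt w u) = ((Cl lev (lev w + 1)).card : ℤ) := by
    rw [Finset.sum_congr rfl (g := fun _ => (1 : ℤ)) fun u hu => by
      rw [pt_self, pt_ne (by rintro rfl; rw [mem_Cl] at hu; omega)]; ring]
    simp
  rw [h2, h3, h4] at h1
  rw [h1]
  congr 1
  by_cases h0 : lev w = 0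
  · rw [if_neg (by omega), if_pos h0, h0]
    have : Cl lev 0 = {t 0} := by
      ext x
      rw [mem_Cl, Finset.mem_singleton]
      exact ⟨H.lev0 x, by rintro rfl; exact H.lev_t 0 (by omega)⟩
    rw [this]; simp
  · obtain ⟨i, hi⟩ := Nat.exists_eq_succ_of_ne_zero h0
    have him : i < m := by have := H.lev_le w; omega
    have hNs' : N (i + 1) = N i + ((Cl lev (i + 1)).card : ℤ) := H.Nsucc i him
    rw [if_pos (by omega), if_neg h0, hi, pt_self]
    simp only [Nat.succ_eq_add_one, Nat.add_sub_cancel]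
    rw [pt_ne (by intro h; have := H.lev_t i him.le; rw [h] at this; omega), hNs']
    ring

lemma canon_aux (H : QBS G m lev t N) : ∀ i, i ≤ m →
    G.LinEquiv (fun w => (N i - 2) * dv t N i w)
      (fun w => if lev w ≤ i then (if lev w = 0 then 0 else N (lev w)) - 2
        + (if w = t (lev w) ∧ lev w < i then
            (N (lev w) + 1) * ((Cl lev (lev w + 1)).card : ℤ) else 0) else 0) := by
  intro i
  induction i with
  | zero =>
    intro _
    have ht0 := H.lev_t 0 (by omega)
    convert le_refl' G (fun w => (N 0 - 2) * dv t N 0 w) using 1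
    funext w
    unfold dv
    rw [H.N0]
    by_cases hw : w = t 0
    · subst hw; simp [ht0]
    · have : ¬ lev w ≤ 0 := fun h => hw (H.lev0 w (by omega))
      simp [hw, this]
  | succ i ih =>
    intro hi
    have hi' : i < m := hi
    have hti := H.lev_t i hi'.le
    have hNs' : N (i + 1) = N i + ((Cl lev (i + 1)).card : ℤ) := H.Nsucc i hi
    have h1 := le_smul G (N (i + 1) - 2) (dv_rel H hi')
    refine le_trans' G h1 ?_
    have h2 := le_add G (ih (by omega)) (le_refl' G
      (fun w => ((Cl lev (i + 1)).card : ℤ) * dv t N i w + (N (i + 1) - 2) * ind lev (i + 1) w))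
    convert h2 using 1
    · funext w
      rw [hNs']
      ring
    · funext w
      unfold dv ind
      rcases lt_trichotomy (lev w) (i + 1) with h | h | h
      · rw [if_pos (by omega), if_pos (show lev w ≤ i by omega),
          if_neg (show lev w ≠ i + 1 by omega)]
        by_cases hwi : lev w = i
        · rw [hwi]
          by_cases hwt : w = t i
          · simp only [hwt, true_and, if_true, lt_irrefl, if_false, Nat.lt_succ_self, and_false]
            ring
          · simp [hwt]
        · have : w ≠ t i := by rintro rfl; exact hwi hti
          simp only [this, if_false, show lev w < i + 1 by omega, show lev w < i by omega]
          ring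
      · have h3 : w ≠ t i := by rintro rfl; omega
        simp only [h3, h, if_false, if_true, show ¬ (i + 1 ≤ i) by omega, le_refl, lt_irrefl,
          and_false, show i + 1 ≠ 0 by omega]
        ring
      · have h3 : w ≠ t i := by rintro rfl; omega
        rw [if_neg (by omega), if_neg (by omega), if_neg h3, if_neg (by omega)]
        ring

lemma canon (H : QBS G m lev t N) :
    G.LinEquiv (fun w => (N m - 2) * dv t N m w) G.canonical := by
  convert canon_aux H m le_rfl using 1
  funext w
  unfold canonical
  have hl := H.lev_le w
  rw [val_formula H w, if_pos hl]
  by_cases hm : lev w < m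
  · simp only [hm, and_true]; ring
  · have h1 : Cl lev (lev w + 1) = ∅ := by
      ext x
      have := H.lev_le x
      simp only [mem_Cl, Finset.notMem_empty, iff_false]
      omega
    rw [h1]
    simp [hm]

lemma half (l : ℤ) : 2 * (l * (l + 3) / 2) = l * (l + 3) := by
  have : Even (l * (l + 3)) := by
    rcases Int.even_or_odd l with h | h
    · exact h.mul_right _
    · exact (h.add_odd (by decide)).mul_left _
  exact Int.mul_ediv_cancel' this.two_dvd

lemma rank_dv (H : QBS G m lev t N) (l : ℕ) (hl : (l : ℤ) ≤ N m) :
    G.rank (fun w => (l : ℤ) * dv t N m w) = (l : ℤ) * (l + 3) / 2 := by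
  have : Nonempty V := ⟨t 0⟩
  have hh := half l
  refine rank_eq G _ _ (fun E hE hd => ?_) ?_
  · refine lower H m le_rfl l hl E hE (fun w hw => ?_) ?_
    · have := H.lev_le w; omega
    · unfold degree at hd
      rw [hd, hh]
  · obtain ⟨E, hE, hd, hn⟩ := upper H l hl
    refine ⟨E, hE, ?_, hn⟩
    unfold degree
    linarith

lemma eff_two (x y : V) : Effective (fun w => pt x w + pt y w) := fun w =>
  add_nonneg (pt_nonneg x w) (pt_nonneg y w)

lemma deg_two (x y : V) : degree (fun w => pt x w + pt y w) = 2 := by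
  unfold degree
  rw [Finset.sum_add_distrib, sum_pt, sum_pt]; norm_num

lemma gon_one (H : QBS G m lev t N) : G.gonality 1 = N m := by
  have : Nonempty V := ⟨t 0⟩
  have hN := N_pos H m le_rfl
  have hsupp : ∀ A : V → ℤ, ∀ w, m < lev w → A w = 0 := fun A w hw => by
    have := H.lev_le w; omega
  refine IsLeast.csInf_eq ⟨⟨fun w => dv t N m w - pt (t 0) w, ?_, ?_⟩, ?_⟩
  · refine rank_eq G _ _ (fun E hE hd => ?_) ?_
    · have h1 := lower H m le_rfl 1 (by push_cast; exact hN) (fun w => pt (t 0) w + E w)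
        (fun w => add_nonneg (pt_nonneg _ _) (hE w)) (hsupp _) (by
          unfold degree at hd
          rw [Finset.sum_add_distrib, sum_pt, hd]; norm_num)
      refine win_mono G (fun w => ?_) h1
      push_cast
      linarith
    · by_contra hcon
      push Not at hcon
      have h1 := gon_lower H m le_rfl (fun w => dv t N m w - pt (t 0) w - pt (t 0) w) (hsupp _)
        (fun x _ => win_mono G (fun w => by linarith)
          (hcon (fun w => pt (t 0) w + pt x w) (eff_two _ _) (by rw [deg_two]; norm_num)))
      rw [Finset.sum_sub_distrib, Finset.sum_sub_distrib, sum_dv, sum_pt] at h1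
      linarith
  · unfold degree
    rw [Finset.sum_sub_distrib, sum_dv, sum_pt]; ring
  · rintro d ⟨A, hA, rfl⟩
    exact gon_lower H m le_rfl A (hsupp _) fun x _ =>
      rank_mem G A 1 hA (pt x) (pt_nonneg x) (sum_pt x)

lemma gon_two (H : QBS G m lev t N) : G.gonality 2 = N m + 1 := by
  have : Nonempty V := ⟨t 0⟩
  have hN := N_pos H m le_rfl
  have hsupp : ∀ A : V → ℤ, ∀ w, m < lev w → A w = 0 := fun A w hw => by
    have := H.lev_le w; omega
  refine IsLeast.csInf_eq ⟨⟨dv t N m, ?_, sum_dv m⟩, ?_⟩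
  · have h1 := rank_dv H 1 (by push_cast; exact hN)
    simpa using h1
  · rintro d ⟨A, hA, rfl⟩
    have h1 := gon_lower H m le_rfl (fun w => A w - pt (t 0) w) (hsupp _) fun x _ =>
      win_mono G (fun w => by linarith)
        (rank_mem G A 2 hA (fun w => pt (t 0) w + pt x w) (eff_two _ _) (deg_two _ _))
    rw [Finset.sum_sub_distrib, sum_pt] at h1
    unfold degree
    linarith

lemma two_case (H : QBS G m lev t N) (hm : m = 1) (hn : N m = 2) (D : V → ℤ)
    (hd : ∑ w, D w = 3) : G.LinEquiv (fun w => 2 * D w) (fun w => 2 * dv t N m w) := by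
  subst hm
  have h0 := H.N0
  have ht0 := H.lev_t 0 (by omega)
  have ht1 := H.lev_t 1 (by omega)
  have hNs' : N (0 + 1) = N 0 + ((Cl lev (0 + 1)).card : ℤ) := H.Nsucc 0 (by omega)
  simp only [Nat.zero_add] at hNs'
  have hc : (Cl lev 1).card = 1 := by omega
  obtain ⟨x, hx⟩ := Finset.card_eq_one.1 hc
  have hone : ∀ w, lev w = 1 → w = t 1 := by
    intro w hw
    have h1 : w ∈ Cl lev 1 := mem_Cl.2 hw
    have h2 : t 1 ∈ Cl lev 1 := mem_Cl.2 ht1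
    rw [hx, Finset.mem_singleton] at h1 h2
    rw [h1, h2]
  have hne : t 0 ≠ t 1 := fun h => by rw [h] at ht0; omega
  have hcases : ∀ w, w = t 0 ∨ w = t 1 := by
    intro w
    have := H.lev_le w
    by_cases h : lev w = 0
    · exact Or.inl (H.lev0 w h)
    · exact Or.inr (hone w (by omega))
  have hDe : ∀ w, D w = D (t 0) * pt (t 0) w + D (t 1) * pt (t 1) w := by
    intro w
    rcases hcases w with rfl | rfl
    · rw [pt_self, pt_ne hne]; ring
    · rw [pt_self, pt_ne hne.symm]; ring
  have hsum : D (t 0) + D (t 1) = 3 := by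
    rw [← hd, Finset.sum_congr rfl fun w _ => hDe w, Finset.sum_add_distrib, ← Finset.mul_sum,
      ← Finset.mul_sum, sum_pt, sum_pt]; ring
  have hrel := rel H (i := 0) (by omega) ht1
  have h2 := le_add G hrel (le_refl' G (fun w => - pt (t 1) w))
  have h3 : G.LinEquiv (fun w => 2 * pt (t 1) w) (fun w => 2 * pt (t 0) w) := by
    convert h2 using 1
    · funext w; simp only [Nat.zero_add]; rw [hn]; ring
    · funext w
      rw [dv_pt, h0]
      have : ind lev (0 + 1) w = pt (t 1) w := by
        unfold ind pt
        rcases hcases w with rfl | rfl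
        · simp [ht0, hne]
        · simp [ht1]
      rw [this]; ring
  have h4 := le_add G (le_smul G (D (t 0)) (le_symm G h3))
    (le_refl' G (fun w => 2 * (D (t 1) * pt (t 1) w)))
  convert h4 using 1
  · funext w; rw [hDe w]; ring
  · funext w
    rw [dv_pt, hn]
    have : D (t 0) = 3 - D (t 1) := by linarith
    rw [this]; ring

lemma main (H : QBS G m lev t N) (k : ℕ) (hk : G.gonality 1 = (k : ℤ))
    (D : V → ℤ) (hD : G.Realises 2 D) :
    (∀ l : ℤ, -1 ≤ l → l ≤ (k : ℤ) →
      G.rank (fun w => l * D w) = l * (l + 3) / 2) ∧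
    G.LinEquiv (fun w => ((k : ℤ) - 2) * D w) G.canonical := by
  have : Nonempty V := ⟨t 0⟩
  have hN := N_pos H m le_rfl
  rw [gon_one H] at hk
  obtain ⟨hr, hdeg⟩ := hD
  rw [gon_two H] at hdeg
  have hdeg' : ∑ w, D w = N m + 1 := hdeg
  have hdich : G.LinEquiv D (dv t N m) ∨ (m = 1 ∧ N m = 2) := by
    rcases Nat.eq_zero_or_pos m with hm | hm
    · left
      have hs : ∀ A : V → ℤ, ∀ w, 0 < lev w → A w = 0 := fun A w hw => by
        have := H.lev_le w; omega
      have h1 := sum_zero H (hs D)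
      convert le_refl' G D using 1
      funext w
      have hw : w = t 0 := H.lev0 w (by have := H.lev_le w; omega)
      rw [hw, ← h1, hdeg', hm]
      simp [dv]
    · obtain ⟨i, hi⟩ := Nat.exists_eq_succ_of_ne_zero hm.ne'
      rcases unique_top H hi D (fun x y =>
        rank_mem G D 2 hr (fun w => pt x w + pt y w) (eff_two _ _) (deg_two _ _)) hdeg' with h | h
      · exact Or.inl h
      · exact Or.inr ⟨by omega, h.2⟩
  have hmul : ∀ l : ℤ, 0 ≤ l → l ≤ N m → l ≠ 1 →
      G.LinEquiv (fun w => l * D w) (fun w => l * dv t N m w) := by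
    intro l h0 hl h1
    rcases hdich with h | ⟨h, h2⟩
    · exact le_smul G l h
    · have : l = 0 ∨ l = 2 := by omega
      rcases this with rfl | rfl
      · simpa using le_refl' G _
      · exact two_case H h h2 D (by rw [hdeg', h2]; norm_num)
  rw [← hk]
  refine ⟨fun l hl1 hl2 => ?_, le_trans' G ?_ (canon H)⟩
  · by_cases h0 : l = -1
    · subst h0
      refine rank_eq G _ _ (fun E hE hd => ?_) ⟨fun _ => 0, fun _ => le_rfl, ?_, fun hw => ?_⟩
      · exfalso
        have h1 : 0 ≤ degree E := Finset.sum_nonneg fun w _ => hE w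
        rw [hd] at h1
        norm_num at h1
      · simp [degree]
      · have h1 := win_deg G hw
        rw [Finset.sum_sub_distrib, ← Finset.mul_sum, hdeg', Finset.sum_const_zero] at h1
        linarith
    · by_cases h1 : l = 1
      · subst h1
        simpa using hr
      · obtain ⟨n, rfl⟩ := Int.eq_ofNat_of_zero_le (show 0 ≤ l by omega)
        rw [rank_congr G (hmul _ (by omega) hl2 h1)]
        exact rank_dv H n hl2
  · rcases hdich with h | ⟨h, h2⟩
    · exact le_smul G _ h
    · rw [h2]
      simpa using le_refl' G _

end Struct

lemma exists_QBS (G : Multigraph V) (hQB : G.IsQuasiBanana) :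
    ∃ (m : ℕ) (lev : V → ℕ) (t : ℕ → V) (N : ℕ → ℤ), QBS G m lev t N := by
  obtain ⟨m, q, l, hq, hinj, hran, hsur, hmult⟩ := hQB
  have hsz : ∀ i, i ≤ m → 1 ≤ qbSize q i := by
    intro i hi
    unfold qbSize
    split_ifs with h
    · exact le_rfl
    · exact hq i (by omega) hi
  obtain ⟨v0, hv0⟩ := hsur 0 1 (by omega) le_rfl (hsz 0 (by omega))
  have hex : ∀ i, ∃ v, i ≤ m → l v = (i, 1) := by
    intro i
    by_cases h : i ≤ m
    · obtain ⟨v, hv⟩ := hsur i 1 h le_rfl (hsz i h)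
      exact ⟨v, fun _ => hv⟩
    · exact ⟨v0, fun h' => absurd h' h⟩
  choose t ht using hex
  have htop : ∀ v, v = t (l v).1 ↔ (l v).2 = 1 := by
    intro v
    have h1 := ht (l v).1 (hran v).1
    constructor
    · intro h
      rw [← h] at h1
      rw [h1]
    · intro h
      refine hinj ?_
      rw [h1, ← h]
  refine ⟨m, fun v => (l v).1, t, fun i => 1 + ((∑ j ∈ Finset.Icc 1 i, q j : ℕ) : ℤ),
    fun v => (hran v).1, fun i hi => by rw [ht i hi], by simp, ?_, ?_, ?_, ?_, ?_⟩
  · intro v hv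
    have h1 := hran v
    have h2 := (htop v).2 (by
      rw [hv] at h1
      simp only [qbSize, if_true] at h1
      omega)
    rwa [hv] at h2
  · intro i hi
    have hcard : (univ.filter fun v => (l v).1 = i + 1).card = q (i + 1) := by
      have h1 : (univ.filter fun v => (l v).1 = i + 1).image (fun v => (l v).2)
          = Finset.Icc 1 (q (i + 1)) := by
        ext j
        simp only [Finset.mem_image, Finset.mem_filter, Finset.mem_univ, true_and, Finset.mem_Icc]
        constructor
        · rintro ⟨v, hv, rfl⟩
          have h2 := hran v
          rw [hv] at h2
          simpa [qbSize] using h2.2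
        · rintro ⟨h2, h3⟩
          obtain ⟨v, hv⟩ := hsur (i + 1) j hi h2 (by simpa [qbSize] using h3)
          exact ⟨v, by rw [hv], by rw [hv]⟩
      rw [← Finset.card_image_of_injOn (f := fun v => (l v).2), h1]
      · simp
      · intro a ha b hb hab
        simp only [Finset.coe_filter, Finset.mem_univ, true_and, Set.mem_setOf_eq] at ha hb
        exact hinj (Prod.ext (by rw [ha, hb]) hab)
    rw [hcard, Finset.sum_Icc_succ_top (by omega)]
    push_cast
    ring
  · intro v w hne hvw
    rw [hmult v w hne, if_pos hvw]
  · intro v w hvw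
    have hne : v ≠ w := by rintro rfl; omega
    rw [hmult v w hne, if_neg (by omega)]
    by_cases h1 : (l v).2 = 1
    · rw [if_pos ⟨hvw.symm, h1⟩, if_pos ((htop v).2 h1)]
      push_cast
      ring
    · rw [if_neg (fun h => h1 h.2), if_neg (fun h => by omega), if_neg (fun h => h1 ((htop v).1 h))]
      rfl
  · intro v w hvw
    have hne : v ≠ w := by rintro rfl; omega
    rw [hmult v w hne, if_neg (by omega), if_neg (fun h => by omega), if_neg (fun h => by omega)]

end QBProof


/-- If `G` is a quasi-banana graph with first gonality `k` and `D` realises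
the second gonality, then for every `-1 ≤ l ≤ k`, `r(l·D) = l(l+3)/2`; in particular
`(k-2)·D` is linearly equivalent to the canonical divisor. -/
theorem stmt4 (G : Multigraph V) (hG : G.Connected) (hQB : G.IsQuasiBanana)
    (k : ℕ) (hk : G.gonality 1 = (k : ℤ))
    (D : V → ℤ) (hD : G.Realises 2 D) :
    (∀ l : ℤ, -1 ≤ l → l ≤ (k : ℤ) →
      G.rank (fun w => l * D w) = l * (l + 3) / 2) ∧
    G.LinEquiv (fun w => ((k : ℤ) - 2) * D w) G.canonical := by
  obtain ⟨m, lev, t, N, H⟩ := QBProof.exists_QBS G hQB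
  exact QBProof.main H k hk D hD
end
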